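/- arXiv:1907.08084 — 12 statements merged into one kernel-verified Lean document; each statement's English description precedes it below -/
import Mathlib

section
/- For every even positive integer n, there exists a 4-uniform hypergraph on n vertices which is both F_4(5,2)-free and F_4(6,3)-free and which has exactly (1/4)·C(n,3) − n(n−2)/8 edges. -/
/-!
Identify the vertex set with `ℤ/n` and take as edges all 4-subsets with sum `s = 1`. Since `n` is
even, `1` is not of the form `x + x`, and this is all that is used; the argument is carried out in
an arbitrary finite abelian group `G` with an element `s` that is not a double.

* Three vertices of an edge determine the fourth, so two edges share at most two vertices and
  span at least six (`six_le_card_union`). This gives `F₄(5,2)`-freeness.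
* If three edges `A, B, C` lie on six points, the complement of `A` is `B ∩ C`; adding up sums
  yields `s = 2 ∑ (B ∩ C)`, which is impossible. This gives `F₄(6,3)`-freeness.
* A triple `T` lies in a (unique) edge exactly when `s - ∑ T ∉ T`. So four times the number of
  edges is the number of these triples (`card_good`). A remaining triple is `{a, b, s - 2a - b}`
  with `a = s - ∑ T`; it arises from the two pairs `(a, b)` and `(a, s - 2a - b)`, and the
  admissible pairs are those with `b ∉ {a, s - 3a}`. As `4a ≠ s`, there are `N (N - 2)` of them,
  where `N = |G|` (`card_bad`).
-/

/-- An `r`-graph (set of edges) is `F_r(v,e)`-free if there do not exist `e` distinct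
edges whose union contains at most `v` vertices. -/
def FrFree {V : Type*} [DecidableEq V] (H : Finset (Finset V)) (v e : ℕ) : Prop :=
  ¬ ∃ S ⊆ H, S.card = e ∧ (S.biUnion id).card ≤ v

section SumHypergraph

variable {G : Type*} [AddCommGroup G] [Fintype G] [DecidableEq G]

/-- The 4-uniform hypergraph on `G` whose edges are the 4-subsets with sum `s`. -/
def sumGraph (s : G) : Finset (Finset G) :=
  {A | A.card = 4 ∧ ∑ x ∈ A, x = s}

/-- The triples contained in an edge of `sumGraph s`: those whose completion to sum `s` is a new
vertex. -/
def goodTriples (s : G) : Finset (Finset G) :=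
  {T | T.card = 3 ∧ s - ∑ x ∈ T, x ∉ T}

/-- The triples contained in no edge of `sumGraph s`. -/
def badTriples (s : G) : Finset (Finset G) :=
  {T | T.card = 3 ∧ s - ∑ x ∈ T, x ∈ T}

lemma six_le_card_union {s : G} {A B : Finset G} (hA : A ∈ sumGraph s) (hB : B ∈ sumGraph s)
    (hne : A ≠ B) : 6 ≤ (A ∪ B).card := by
  simp only [sumGraph, Finset.mem_filter, Finset.mem_univ, true_and] at hA hB
  obtain ⟨hA, hsA⟩ := hA
  obtain ⟨hB, hsB⟩ := hB
  have h1 := Finset.card_union_add_card_inter A B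
  by_contra hlt
  have h2 := Finset.card_sdiff_add_card_inter A B
  have h3 := Finset.card_sdiff_add_card_inter B A
  rw [Finset.inter_comm B A] at h3
  have h4 : (A \ B).card ≠ 0 := by
    intro h
    rw [Finset.card_eq_zero, Finset.sdiff_eq_empty_iff_subset] at h
    exact hne (Finset.eq_of_subset_of_card_le h (by omega))
  obtain ⟨x, hx⟩ := Finset.card_eq_one.1 (show (A \ B).card = 1 by omega)
  obtain ⟨y, hy⟩ := Finset.card_eq_one.1 (show (B \ A).card = 1 by omega)
  have e1 := Finset.sum_inter_add_sum_sdiff A B (fun x => x)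
  have e2 := Finset.sum_inter_add_sum_sdiff B A (fun x => x)
  rw [hx, Finset.sum_singleton, hsA] at e1
  rw [hy, Finset.sum_singleton, hsB, Finset.inter_comm, ← e1] at e2
  have hxy : y = x := add_left_cancel e2
  have m1 : x ∈ A \ B := by simp [hx]
  have m2 : y ∈ B \ A := by simp [hy]
  rw [Finset.mem_sdiff] at m1 m2
  exact m1.2 (hxy ▸ m2.1)

lemma frFree_five_two (s : G) : FrFree (sumGraph s) 5 2 := by
  rintro ⟨S, hS, hc, hu⟩
  obtain ⟨A, B, hne, rfl⟩ := Finset.card_eq_two.1 hc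
  have := six_le_card_union (hS (by simp)) (hS (by simp)) hne
  simp only [Finset.biUnion_insert, Finset.singleton_biUnion, id] at hu
  omega

lemma frFree_six_three (s : G) (hs : ∀ x, x + x ≠ s) : FrFree (sumGraph s) 6 3 := by
  rintro ⟨S, hS, hc, hu⟩
  obtain ⟨A, B, C, hAB, hAC, hBC, rfl⟩ := Finset.card_eq_three.1 hc
  have hA : A ∈ sumGraph s := hS (by simp)
  have hB : B ∈ sumGraph s := hS (by simp)
  have hC : C ∈ sumGraph s := hS (by simp)
  have u1 := six_le_card_union hA hB hAB
  have u2 := six_le_card_union hA hC hAC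
  have u3 := six_le_card_union hB hC hBC
  simp only [Finset.biUnion_insert, Finset.singleton_biUnion, id] at hu
  simp only [sumGraph, Finset.mem_filter, Finset.mem_univ, true_and] at hA hB hC
  set U := A ∪ (B ∪ C) with hU
  have eAB : A ∪ B = U := Finset.eq_of_subset_of_card_le (by grind) (by omega)
  have eAC : A ∪ C = U := Finset.eq_of_subset_of_card_le (by grind) (by omega)
  have eBC : B ∪ C = U := Finset.eq_of_subset_of_card_le (by grind) (by omega)
  have c3 := Finset.card_union_add_card_inter B C
  have hAU : A ⊆ U := Finset.subset_union_left
  have cU := Finset.card_sdiff_add_card_eq_card hAU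
  have hcompl : U \ A = B ∩ C := by
    refine Finset.eq_of_subset_of_card_le (fun x hx => ?_) ?_
    · rw [Finset.mem_sdiff] at hx
      have h1 : x ∈ A ∪ B := eAB ▸ hx.1
      have h2 : x ∈ A ∪ C := eAC ▸ hx.1
      grind
    · rw [← eAB] at *
      omega
  have s1 := Finset.sum_sdiff (f := fun x => x) hAU
  have s2 := Finset.sum_union_inter (s₁ := B) (s₂ := C) (f := fun x => x)
  rw [hcompl, hA.2] at s1
  rw [eBC, ← s1, hB.2, hC.2] at s2
  refine hs (∑ x ∈ B ∩ C, x) ?_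
  have : (∑ x ∈ B ∩ C, x + ∑ x ∈ B ∩ C, x) + s = s + s := by rw [← s2]; abel
  exact add_right_cancel this

lemma card_good (s : G) : 4 * (sumGraph s).card = (goodTriples s).card := by
  have h : ((sumGraph s).sigma fun A => A).card = 4 * (sumGraph s).card := by
    rw [Finset.card_sigma, Finset.sum_const_nat (m := 4), mul_comm]
    intro A hA
    exact (Finset.mem_filter.1 hA).2.1
  rw [← h]
  have key : ∀ (A : Finset G) (x : G), ∑ y ∈ A, y = s → x ∈ A → s - ∑ y ∈ A.erase x, y = x := by
    intro A x hA hx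
    rw [← hA, ← Finset.add_sum_erase A (fun y => y) hx]
    abel
  -- An edge with a marked vertex corresponds to the triple of its other vertices.
  refine Finset.card_bij' (fun p _ => p.1.erase p.2)
    (fun T _ => ⟨insert (s - ∑ x ∈ T, x) T, s - ∑ x ∈ T, x⟩) ?_ ?_ ?_ ?_
  · rintro ⟨A, x⟩ hp
    simp only [sumGraph, Finset.mem_sigma, Finset.mem_filter, Finset.mem_univ, true_and] at hp
    simp only [goodTriples, Finset.mem_filter, Finset.mem_univ, true_and]
    rw [key A x hp.1.2 hp.2, Finset.card_erase_of_mem hp.2, hp.1.1]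
    simp
  · intro T hT
    simp only [goodTriples, Finset.mem_filter, Finset.mem_univ, true_and] at hT
    simp only [sumGraph, Finset.mem_sigma, Finset.mem_filter, Finset.mem_univ, true_and]
    rw [Finset.card_insert_of_notMem hT.2, Finset.sum_insert hT.2, hT.1]
    simp
  · rintro ⟨A, x⟩ hp
    simp only [sumGraph, Finset.mem_sigma, Finset.mem_filter, Finset.mem_univ, true_and] at hp
    simp only [key A x hp.1.2 hp.2, Finset.insert_erase hp.2]
  · intro T hT
    simp only [goodTriples, Finset.mem_filter, Finset.mem_univ, true_and] at hT
    exact Finset.erase_insert hT.2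

lemma card_bad (s : G) (hs : ∀ x, x + x ≠ s) :
    2 * (badTriples s).card = Fintype.card G * (Fintype.card G - 2) := by
  have h1 : ((badTriples s).sigma fun T => T.erase (s - ∑ x ∈ T, x)).card
      = 2 * (badTriples s).card := by
    rw [Finset.card_sigma, Finset.sum_const_nat (m := 2), mul_comm]
    intro T hT
    simp only [badTriples, Finset.mem_filter, Finset.mem_univ, true_and] at hT
    rw [Finset.card_erase_of_mem hT.2, hT.1]
  have h2 : ((Finset.univ : Finset G).sigma fun a => ({a, s - a - a - a} : Finset G)ᶜ).card
      = Fintype.card G * (Fintype.card G - 2) := by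
    rw [Finset.card_sigma, Finset.sum_const_nat (m := Fintype.card G - 2), Finset.card_univ]
    intro a _
    rw [Finset.card_compl, Finset.card_pair]
    intro h
    -- `a = s - 3a` would make `s` the double of `2a`.
    refine hs (a + a) ?_
    nth_rewrite 1 [h]
    abel
  rw [← h1, ← h2]
  have tri : ∀ a b : G, b ≠ a → b ≠ s - a - a - a →
      a ∉ ({b, s - a - a - b} : Finset G) ∧ b ∉ ({s - a - a - b} : Finset G) := by
    intro a b hab hb
    simp only [Finset.mem_insert, Finset.mem_singleton, not_or]
    refine ⟨⟨hab.symm, fun h => hb ?_⟩, fun h => hs (a + b) ?_⟩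
    · nth_rewrite 3 [h]; abel
    · nth_rewrite 1 [h]; abel
  have sumtri : ∀ a b : G, b ≠ a → b ≠ s - a - a - a →
      s - ∑ x ∈ ({a, b, s - a - a - b} : Finset G), x = a := by
    intro a b hab hb
    rw [Finset.sum_insert (tri a b hab hb).1, Finset.sum_insert (tri a b hab hb).2,
      Finset.sum_singleton]
    abel
  -- The remaining vertex of a triple with completion `a` and a second vertex `b`.
  have shape : ∀ (T : Finset G) (b : G), T.card = 3 → s - ∑ x ∈ T, x ∈ T →
      b ∈ T.erase (s - ∑ x ∈ T, x) → ∀ a, a = s - ∑ x ∈ T, x →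
      a ≠ b ∧ a ≠ s - a - a - b ∧ T = {a, b, s - a - a - b} := by
    intro T b hT haT hb a ha
    rw [← ha] at haT hb
    obtain ⟨c, hc⟩ := Finset.card_eq_one.1 (show ((T.erase a).erase b).card = 1 by
      rw [Finset.card_erase_of_mem hb, Finset.card_erase_of_mem haT, hT])
    have e1 := Finset.add_sum_erase T (fun y => y) haT
    have e2 := Finset.add_sum_erase (T.erase a) (fun y => y) hb
    rw [hc, Finset.sum_singleton] at e2
    have hcc : c = s - a - a - b := by
      have : s - a = a + (b + c) := by rw [e2, e1, ha]; abel
      rw [this]; abel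
    have hcm : c ∈ (T.erase a).erase b := by simp [hc]
    simp only [Finset.mem_erase] at hcm hb
    refine ⟨hb.1.symm, hcc ▸ hcm.2.1.symm, ?_⟩
    rw [← hcc, ← hc, Finset.insert_erase (by simpa using hb), Finset.insert_erase haT]
  refine Finset.card_bij' (fun p _ => ⟨s - ∑ x ∈ p.1, x, p.2⟩)
    (fun q _ => ⟨{q.1, q.2, s - q.1 - q.1 - q.2}, q.2⟩) ?_ ?_ ?_ ?_
  · rintro ⟨T, b⟩ hp
    simp only [badTriples, Finset.mem_sigma, Finset.mem_filter, Finset.mem_univ, true_and] at hp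
    obtain ⟨h1, h2, -⟩ := shape T b hp.1.1 hp.1.2 hp.2 _ rfl
    simp only [Finset.mem_sigma, Finset.mem_univ, true_and, Finset.mem_compl, Finset.mem_insert,
      Finset.mem_singleton, not_or]
    refine ⟨h1.symm, fun h => h2 ?_⟩
    generalize s - ∑ x ∈ T, x = a at *
    rw [h]; abel
  · rintro ⟨a, b⟩ hq
    simp only [Finset.mem_sigma, Finset.mem_univ, true_and, Finset.mem_compl, Finset.mem_insert,
      Finset.mem_singleton, not_or] at hq
    obtain ⟨t1, t2⟩ := tri a b hq.1 hq.2
    simp only [badTriples, Finset.mem_sigma, Finset.mem_filter, Finset.mem_univ, true_and]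
    rw [sumtri a b hq.1 hq.2, Finset.card_insert_of_notMem t1, Finset.card_insert_of_notMem t2]
    simp [hq.1]
  · rintro ⟨T, b⟩ hp
    simp only [badTriples, Finset.mem_sigma, Finset.mem_filter, Finset.mem_univ, true_and] at hp
    obtain ⟨-, -, h3⟩ := shape T b hp.1.1 hp.1.2 hp.2 _ rfl
    simp only [← h3]
  · rintro ⟨a, b⟩ hq
    simp only [Finset.mem_sigma, Finset.mem_univ, true_and, Finset.mem_compl, Finset.mem_insert,
      Finset.mem_singleton, not_or] at hq
    simp only [sumtri a b hq.1 hq.2]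

lemma card_good_add_card_bad (s : G) :
    (goodTriples s).card + (badTriples s).card = (Fintype.card G).choose 3 := by
  rw [← Finset.card_univ, ← Finset.card_powersetCard, add_comm,
    ← Finset.card_filter_add_card_filter_not (s := Finset.powersetCard 3 Finset.univ)
      (fun T : Finset G => s - ∑ x ∈ T, x ∈ T)]
  refine congrArg₂ Nat.add (congrArg Finset.card ?_) (congrArg Finset.card ?_) <;> ext T <;>
    simp [goodTriples, badTriples, Finset.mem_powersetCard]

end SumHypergraph

/-- For every even positive integer `n`, there exists a 4-uniform hypergraph on `n`
vertices which is both `F₄(5,2)`-free and `F₄(6,3)`-free and which has exactly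
`(1/4)·C(n,3) − n(n−2)/8` edges. -/
theorem stmt_0 (n : ℕ) (hn : 0 < n) (heven : Even n) :
    ∃ H : Finset (Finset (Fin n)),
      (∀ A ∈ H, A.card = 4) ∧
      FrFree H 5 2 ∧ FrFree H 6 3 ∧
      (H.card : ℚ) = (n.choose 3 : ℚ) / 4 - (n : ℚ) * ((n : ℚ) - 2) / 8 := by
  have : NeZero n := ⟨hn.ne'⟩
  obtain ⟨m, hm⟩ := heven
  have hs : ∀ x : Fin n, x + x ≠ ⟨1, by omega⟩ := by
    intro x h
    have h' := congrArg Fin.val h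
    rw [Fin.val_add] at h'
    have h2 : (x.val + x.val) % n % 2 = (x.val + x.val) % 2 :=
      Nat.mod_mod_of_dvd _ ⟨m, by omega⟩
    simp only at h'
    omega
  refine ⟨sumGraph ⟨1, by omega⟩, fun A hA => (Finset.mem_filter.1 hA).2.1,
    frFree_five_two _, frFree_six_three _ hs, ?_⟩
  have g := card_good (⟨1, by omega⟩ : Fin n)
  have b := card_bad _ hs
  have t := card_good_add_card_bad (⟨1, by omega⟩ : Fin n)
  rw [Fintype.card_fin] at b t
  rw [← g] at t
  have hb : (2 : ℚ) * (badTriples (⟨1, by omega⟩ : Fin n)).card = n * (n - 2) := by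
    have h2 : 2 ≤ n := by omega
    have := congrArg (Nat.cast : ℕ → ℚ) b
    push_cast [Nat.cast_sub h2] at this
    exact this
  have ht := congrArg (Nat.cast : ℕ → ℚ) t
  push_cast at ht
  linarith
end

section
/- For every positive integer n, in the 4-graph H(n) every 3-element subset of ℤ/nℤ is contained in at most one edge; in particular H(n) is F_4(5,2)-free. -/
/-- `H(n)`: the 4-graph on `ℤ/nℤ` whose edges are the 4-element subsets with
element-sum equal to `1`. -/
def Hgraph (n : ℕ) [NeZero n] : Finset (Finset (ZMod n)) :=
  Finset.univ.filter (fun A => A.card = 4 ∧ A.sum id = 1)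

/-- An edge of `H(n)` containing a triple `T` is `T` together with the vertex `1 - ∑ T`, so two
edges sharing a triple coincide. -/
theorem Hgraph_eq_of_triple (n : ℕ) [NeZero n] {T A B : Finset (ZMod n)} (hT : T.card = 3)
    (hA : A ∈ Hgraph n) (hB : B ∈ Hgraph n) (hTA : T ⊆ A) (hTB : T ⊆ B) : A = B := by
  have key : ∀ C ∈ Hgraph n, T ⊆ C → C = insert (1 - T.sum id) T := by
    intro C hC hTC
    simp only [Hgraph, Finset.mem_filter, Finset.mem_univ, true_and] at hC
    obtain ⟨x, hx⟩ : ∃ x, C \ T = {x} := by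
      rw [← Finset.card_eq_one, Finset.card_sdiff_of_subset hTC, hC.1, hT]
    have hsum := Finset.sum_sdiff (f := id) hTC
    rw [hx, Finset.sum_singleton, hC.2, id] at hsum
    rw [← Finset.sdiff_union_of_subset hTC, hx, ← hsum, add_sub_cancel_right]
    rfl
  rw [key A hA hTA, key B hB hTB]

/-- For every positive integer `n`, in the 4-graph `H(n)` every 3-element subset of
`ℤ/nℤ` is contained in at most one edge; in particular `H(n)` is `F₄(5,2)`-free. -/
theorem stmt_1 (n : ℕ) [NeZero n] :
    (∀ T : Finset (ZMod n), T.card = 3 →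
      ((Hgraph n).filter (fun A => T ⊆ A)).card ≤ 1) ∧
    FrFree (Hgraph n) 5 2 := by
  refine ⟨fun T hT => Finset.card_le_one.2 fun A hA B hB => ?_, ?_⟩
  · rw [Finset.mem_filter] at hA hB
    exact Hgraph_eq_of_triple n hT hA.1 hB.1 hA.2 hB.2
  · rintro ⟨S, hS, hcard, hle⟩
    obtain ⟨A, B, hne, rfl⟩ := Finset.card_eq_two.1 hcard
    have hA : A ∈ Hgraph n := hS (by simp)
    have hB : B ∈ Hgraph n := hS (by simp)
    have hA4 : A.card = 4 := (Finset.mem_filter.1 hA).2.1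
    have hB4 : B.card = 4 := (Finset.mem_filter.1 hB).2.1
    have hU : (A ∪ B).card ≤ 5 := by simpa [Finset.biUnion_insert] using hle
    -- Two 4-sets spanning at most 5 vertices share a triple.
    have hI : 3 ≤ (A ∩ B).card := by
      have := Finset.card_union_add_card_inter A B
      omega
    obtain ⟨T, hTI, hT⟩ := Finset.exists_subset_card_eq hI
    exact hne (Hgraph_eq_of_triple n hT hA hB (hTI.trans Finset.inter_subset_left)
      (hTI.trans Finset.inter_subset_right))
end

section
/- For every even positive integer n, the number of 4-element subsets {i,j,k,l} of ℤ/nℤ with i+j+k+l ≡ 1 (mod n) equals (1/4)·C(n,3) − n(n−2)/8. -/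
/-!
The count is done by two applications of double counting.

Let `N` be the number of 4-subsets with sum `1`. Removing an element `x` from such a set `A` leaves
a 3-subset `B` with `x = 1 - ∑ B`, so pairs `(A, x)` with `x ∈ A` correspond to 3-subsets `B` with
`1 - ∑ B ∉ B` (`four_mul_card`). Hence `4 N = C(n,3) - M`, where `M` counts the 3-subsets `B` with
`1 - ∑ B ∈ B`.

For such a `B`, put `i = 1 - ∑ B` and choose `x ∈ B \ {i}`. The third element is then `1 - 2i - x`,
so `2 M` counts the pairs `(i, x)` for which `i`, `x` and `1 - 2i - x` are distinct
(`two_mul_card_bad`). Since `n` is even, `1` is not of the form `2z`; therefore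
`x ≠ 1 - 2i - x` always holds, and `i ≠ 1 - 3i`, so each `i` admits exactly `n - 2` values of `x`.
Thus `2 M = n (n - 2)`.
-/

open Finset

lemma two_mul_ne_one_of_even {n : ℕ} (heven : Even n) (z : ZMod n) : 2 * z ≠ 1 := by
  intro h
  -- Reduction modulo `2` would give `0 = 1`.
  have h2 := congrArg (ZMod.castHom heven.two_dvd (ZMod 2)) h
  rw [map_mul, map_one, map_ofNat] at h2
  generalize ZMod.castHom heven.two_dvd (ZMod 2) z = w at h2
  revert w
  decide

/-- Pairs of a 4-subset with sum `1` and an element of it correspond to the 3-subsets `B` with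
`1 - ∑ B ∉ B`, by removing the element. -/
lemma four_mul_card (n : ℕ) [NeZero n] :
    4 * #{A : Finset (ZMod n) | #A = 4 ∧ A.sum id = 1} =
      #{B : Finset (ZMod n) | #B = 3 ∧ 1 - B.sum id ∉ B} := by
  have hsig : #(({A : Finset (ZMod n) | #A = 4 ∧ A.sum id = 1} : Finset _).sigma fun A => A) =
      4 * #{A : Finset (ZMod n) | #A = 4 ∧ A.sum id = 1} := by
    rw [card_sigma, sum_congr rfl (g := fun _ => 4), sum_const, smul_eq_mul, mul_comm]
    intro A hA
    exact (mem_filter.1 hA).2.1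
  rw [← hsig]
  have key : ∀ (A : Finset (ZMod n)) (x : ZMod n), A.sum id = 1 → x ∈ A →
      1 - (A.erase x).sum id = x := by
    intro A x hA hx
    rw [← hA, ← add_sum_erase A id hx]
    simp
  refine card_nbij' (fun p => p.1.erase p.2)
    (fun B => ⟨insert (1 - B.sum id) B, 1 - B.sum id⟩) ?_ ?_ ?_ ?_
  · rintro ⟨A, x⟩ h
    simp only [coe_sigma, Set.mem_sigma_iff, mem_coe, mem_filter, mem_univ, true_and] at h ⊢
    obtain ⟨⟨h4, h1⟩, hx⟩ := h
    rw [key A x h1 hx, card_erase_of_mem hx, h4]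
    simp
  · intro B h
    simp only [coe_sigma, Set.mem_sigma_iff, mem_coe, mem_filter, mem_univ, true_and] at h ⊢
    obtain ⟨h3, hB⟩ := h
    refine ⟨⟨by rw [card_insert_of_notMem hB, h3], ?_⟩, mem_insert_self _ _⟩
    rw [sum_insert hB]
    simp
  · rintro ⟨A, x⟩ h
    simp only [coe_sigma, Set.mem_sigma_iff, mem_coe, mem_filter, mem_univ, true_and] at h
    obtain ⟨⟨h4, h1⟩, hx⟩ := h
    simp only [key A x h1 hx, insert_erase hx]
  · intro B h
    simp only [mem_coe, mem_filter, mem_univ, true_and] at h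
    exact erase_insert h.2

/-- Pairs of a 3-subset `B` containing `i = 1 - ∑ B` and an element `x ∈ B \ {i}` correspond to
pairs `(i, x)` with `x ∉ {i, 1 - 3i}`: the third element of `B` is `1 - 2i - x`. -/
lemma two_mul_card_bad (n : ℕ) [NeZero n] (heven : Even n) :
    2 * #{B : Finset (ZMod n) | #B = 3 ∧ 1 - B.sum id ∈ B} =
      #((univ : Finset (ZMod n)).sigma fun i => ({i, 1 - 3 * i} : Finset (ZMod n))ᶜ) := by
  have hsig : #(({B : Finset (ZMod n) | #B = 3 ∧ 1 - B.sum id ∈ B} : Finset _).sigma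
      fun B => B.erase (1 - B.sum id)) =
      2 * #{B : Finset (ZMod n) | #B = 3 ∧ 1 - B.sum id ∈ B} := by
    rw [card_sigma, sum_congr rfl (g := fun _ => 2), sum_const, smul_eq_mul, mul_comm]
    intro B hB
    simp only [mem_filter, mem_univ, true_and] at hB
    rw [card_erase_of_mem hB.2, hB.1]
  rw [← hsig]
  have fwd : ∀ (B : Finset (ZMod n)) (x : ZMod n), #B = 3 → 1 - B.sum id ∈ B →
      x ∈ B.erase (1 - B.sum id) → x ≠ 1 - 3 * (1 - B.sum id) ∧
        ({1 - B.sum id, x, 1 - 2 * (1 - B.sum id) - x} : Finset (ZMod n)) = B := by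
    intro B x h3 hi hx
    have hc : #((B.erase (1 - B.sum id)).erase x) = 1 := by
      rw [card_erase_of_mem hx, card_erase_of_mem hi, h3]
    obtain ⟨y, hy⟩ := card_eq_one.1 hc
    have hs := add_sum_erase B id hi
    rw [← add_sum_erase _ id hx, hy, sum_singleton] at hs
    simp only [id] at hs
    have hB : ({1 - B.sum id, x, y} : Finset (ZMod n)) = B := by
      rw [← hy, insert_erase hx, insert_erase hi]
    have hyi : y ≠ 1 - B.sum id := by
      have : y ∈ (B.erase (1 - B.sum id)).erase x := by rw [hy]; simp
      exact (mem_erase.1 (mem_erase.1 this).2).1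
    have hyv : y = 1 - 2 * (1 - B.sum id) - x := by
      simp only [id]
      linear_combination hs
    refine ⟨fun h => hyi ?_, hyv ▸ hB⟩
    rw [hyv]
    linear_combination -h
  have bwd : ∀ i x : ZMod n, x ≠ i → x ≠ 1 - 3 * i →
      #({i, x, 1 - 2 * i - x} : Finset (ZMod n)) = 3 ∧
        1 - ({i, x, 1 - 2 * i - x} : Finset (ZMod n)).sum id = i := by
    intro i x h1 h2
    have hxy : x ≠ 1 - 2 * i - x := fun h =>
      two_mul_ne_one_of_even heven (x + i) (by linear_combination h)
    have hiy : i ≠ 1 - 2 * i - x := fun h => h2 (by linear_combination h)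
    refine ⟨card_eq_three.2 ⟨_, _, _, h1.symm, hiy, hxy, rfl⟩, ?_⟩
    rw [sum_insert (by simp [h1.symm, hiy]), sum_pair hxy]
    simp only [id]
    ring
  refine card_nbij' (fun p => ⟨1 - p.1.sum id, p.2⟩)
    (fun q => ⟨{q.1, q.2, 1 - 2 * q.1 - q.2}, q.2⟩) ?_ ?_ ?_ ?_
  · rintro ⟨B, x⟩ h
    simp only [mem_coe, mem_sigma, mem_filter, mem_univ, true_and] at h ⊢
    have := fwd B x h.1.1 h.1.2 h.2
    simp only [mem_compl, mem_insert, mem_singleton, not_or]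
    exact ⟨(mem_erase.1 h.2).1, this.1⟩
  · rintro ⟨i, x⟩ h
    simp only [mem_coe, mem_sigma, mem_filter, mem_univ, true_and, mem_compl, mem_insert,
      mem_singleton, not_or] at h ⊢
    obtain ⟨hb3, hbs⟩ := bwd i x h.1 h.2
    rw [hbs]
    refine ⟨⟨hb3, by simp⟩, mem_erase.2 ⟨h.1, by simp⟩⟩
  · rintro ⟨B, x⟩ h
    simp only [mem_coe, mem_sigma, mem_filter, mem_univ, true_and] at h
    simp only [(fwd B x h.1.1 h.1.2 h.2).2]
  · rintro ⟨i, x⟩ h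
    simp only [mem_coe, mem_sigma, mem_univ, true_and, mem_compl, mem_insert,
      mem_singleton, not_or] at h
    simp only [(bwd i x h.1 h.2).2]

/-- For every even positive integer `n`, the number of 4-element subsets `{i,j,k,l}` of
`ℤ/nℤ` with `i+j+k+l ≡ 1 (mod n)` equals `(1/4)·C(n,3) − n(n−2)/8`. -/
theorem stmt_2 (n : ℕ) [NeZero n] (heven : Even n) :
    (((Finset.univ : Finset (Finset (ZMod n))).filter
        (fun A => A.card = 4 ∧ A.sum id = 1)).card : ℚ) =
      (n.choose 3 : ℚ) / 4 - (n : ℚ) * ((n : ℚ) - 2) / 8 := by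
  have h4 := four_mul_card n
  have h2 := two_mul_card_bad n heven
  have hpairs : #((univ : Finset (ZMod n)).sigma fun i => ({i, 1 - 3 * i} : Finset (ZMod n))ᶜ) =
      n * (n - 2) := by
    rw [card_sigma, sum_congr rfl (g := fun _ => n - 2), sum_const, smul_eq_mul, card_univ,
      ZMod.card]
    intro i _
    have hi : i ≠ 1 - 3 * i := fun h =>
      two_mul_ne_one_of_even heven (2 * i) (by linear_combination h)
    rw [card_compl, ZMod.card, card_pair hi]
  have h3 : #{B : Finset (ZMod n) | #B = 3 ∧ 1 - B.sum id ∈ B} +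
      #{B : Finset (ZMod n) | #B = 3 ∧ 1 - B.sum id ∉ B} = n.choose 3 := by
    rw [← filter_filter, ← filter_filter, card_filter_add_card_filter_not,
      ← powerset_univ, ← powersetCard_eq_filter, card_powersetCard, card_univ, ZMod.card]
  rw [hpairs] at h2
  have hn : 2 ≤ n := by
    have := NeZero.ne n
    obtain ⟨m, rfl⟩ := heven
    omega
  have h4q := congrArg (Nat.cast : ℕ → ℚ) h4
  have h2q := congrArg (Nat.cast : ℕ → ℚ) h2
  have h3q := congrArg (Nat.cast : ℕ → ℚ) h3
  push_cast [Nat.cast_sub hn] at h4q h2q h3q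
  linear_combination h4q / 4 - h2q / 8 + h3q / 4
end

section
/- For every even positive integer n, the number of 3-element subsets {i,j,k} of ℤ/nℤ satisfying at least one of the congruences 2i+j+k ≡ 1, i+2j+k ≡ 1, i+j+2k ≡ 1 (mod n) equals n(n−2)/2. -/
/-!
Put `s = i + j + k`. The three congruences say that `1 - s` is `i`, `j` or `k` respectively, so a
good triple `T` has exactly one distinguished element `a`, namely `a = 1 - s`, and its other two
elements sum to `1 - 2a`. Hence each good `T` arises as `{a, b, 1 - 2a - b}` from exactly two pairs
`(a, b)`. Conversely `(a, b)` gives three distinct elements iff `b ≠ a` and `b ≠ 1 - 3a`: the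
remaining coincidence `2b = 1 - 2a` is impossible because `n` is even (`two_mul_ne_one`).
For the same reason `a ≠ 1 - 3a`, so there are `n (n - 2)` such pairs (`card_goodPairs`), and this
is twice the number of good triples.
-/

/-- Twice an element of `ℤ/nℤ` is never `1` when `n` is even: reduce modulo `2`. -/
lemma two_mul_ne_one {n : ℕ} (heven : Even n) (x : ZMod n) : 2 * x ≠ 1 := by
  intro h
  have h2 := congrArg (ZMod.castHom heven.two_dvd (ZMod 2)) h
  rw [map_mul, map_one, map_ofNat] at h2
  generalize (ZMod.castHom heven.two_dvd (ZMod 2)) x = y at h2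
  revert y
  decide

/-- The pairs `(a, b)` for which `a`, `b`, `1 - 2a - b` are distinct (when `n` is even). -/
def goodPairs (n : ℕ) [NeZero n] : Finset (ZMod n × ZMod n) :=
  Finset.univ.filter fun p => p.2 ≠ p.1 ∧ p.2 ≠ 1 - 3 * p.1

lemma card_goodPairs {n : ℕ} [NeZero n] (heven : Even n) :
    (goodPairs n).card = n * (n - 2) := by
  have hfib : ∀ a ∈ (Finset.univ : Finset (ZMod n)),
      ((goodPairs n).filter fun p => p.1 = a).card = n - 2 := by
    intro a _
    have hne : a ≠ 1 - 3 * a := fun h => two_mul_ne_one heven (2 * a) (by linear_combination h)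
    have himg : ((goodPairs n).filter fun p => p.1 = a)
        = (({a, 1 - 3 * a} : Finset (ZMod n))ᶜ).image (fun b => (a, b)) := by
      ext ⟨x, y⟩
      simp only [goodPairs, Finset.mem_filter, Finset.mem_univ, true_and, Finset.mem_image,
        Finset.mem_compl, Finset.mem_insert, Finset.mem_singleton, Prod.mk.injEq, not_or]
      constructor
      · rintro ⟨h, rfl⟩
        exact ⟨y, h, rfl, rfl⟩
      · rintro ⟨b, h, rfl, rfl⟩
        exact ⟨h, rfl⟩
    rw [himg, Finset.card_image_of_injective _ (Prod.mk_right_injective a), Finset.card_compl,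
      Finset.card_pair hne, ZMod.card]
  rw [Finset.card_eq_sum_card_fiberwise (f := Prod.fst) (t := Finset.univ)
    (fun _ _ => Finset.mem_coe.2 (Finset.mem_univ _)), Finset.sum_congr rfl hfib]
  simp [ZMod.card]

/-- Every good triple can be listed with its distinguished element first. -/
lemma exists_distinguished {n : ℕ} {T : Finset (ZMod n)}
    (h : ∃ i j k : ZMod n, T = {i, j, k} ∧
      (2 * i + j + k = 1 ∨ i + 2 * j + k = 1 ∨ i + j + 2 * k = 1)) :
    ∃ a b c : ZMod n, T = {a, b, c} ∧ 2 * a + b + c = 1 := by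
  obtain ⟨i, j, k, rfl, h | h | h⟩ := h
  · exact ⟨i, j, k, rfl, h⟩
  · exact ⟨j, i, k, Finset.insert_comm _ _ _, by linear_combination h⟩
  · refine ⟨k, i, j, ?_, by linear_combination h⟩
    ext x
    simp only [Finset.mem_insert, Finset.mem_singleton]
    tauto

lemma distinct_of_card {α : Type*} [DecidableEq α] {a b c : α}
    (h : ({a, b, c} : Finset α).card = 3) : a ≠ b ∧ a ≠ c ∧ b ≠ c := by
  refine ⟨?_, ?_, ?_⟩ <;> rintro rfl
  · have := Finset.card_le_two (a := a) (b := c)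
    simp_all
  · have := Finset.card_le_two (a := b) (b := a)
    rw [Finset.insert_comm] at h
    simp_all
  · have := Finset.card_le_two (a := a) (b := b)
    simp_all

lemma distinct_of_mem_goodPairs {n : ℕ} [NeZero n] (heven : Even n) {a b : ZMod n}
    (h : (a, b) ∈ goodPairs n) : a ≠ b ∧ a ≠ 1 - 2 * a - b ∧ b ≠ 1 - 2 * a - b := by
  simp only [goodPairs, Finset.mem_filter, Finset.mem_univ, true_and] at h
  refine ⟨h.1.symm, fun e => h.2 (by linear_combination e), fun e => ?_⟩
  exact two_mul_ne_one heven (a + b) (by linear_combination e)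

lemma sum_triple {n : ℕ} {a b c : ZMod n} (h : a ≠ b ∧ a ≠ c ∧ b ≠ c) :
    ∑ x ∈ ({a, b, c} : Finset (ZMod n)), x = a + b + c := by
  rw [Finset.sum_insert (by simp [h.1, h.2.1]), Finset.sum_pair h.2.2, add_assoc]

/-- A triple with distinguished element `a` comes from exactly the pairs `(a, b)` and `(a, c)`:
the distinguished element is recovered from the sum of the triple. -/
lemma fiber_eq {n : ℕ} [NeZero n] (heven : Even n) {a b c : ZMod n}
    (hd : a ≠ b ∧ a ≠ c ∧ b ≠ c) (h : 2 * a + b + c = 1) :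
    (goodPairs n).filter
        (fun p => ({p.1, p.2, 1 - 2 * p.1 - p.2} : Finset (ZMod n)) = {a, b, c})
      = {(a, b), (a, c)} := by
  have hc : 1 - 2 * a - b = c := by linear_combination -h
  have hb : 1 - 2 * a - c = b := by linear_combination -h
  ext ⟨x, y⟩
  simp only [Finset.mem_filter, Finset.mem_insert, Finset.mem_singleton, Prod.mk.injEq]
  constructor
  · rintro ⟨hp, he⟩
    have hdist := distinct_of_mem_goodPairs heven hp
    have hs := congrArg (fun T : Finset (ZMod n) => ∑ z ∈ T, z) he
    simp only [sum_triple hdist, sum_triple hd] at hs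
    obtain rfl : x = a := by linear_combination -hs - h
    have hy : y ∈ ({x, b, c} : Finset (ZMod n)) := by rw [← he]; simp
    simp only [Finset.mem_insert, Finset.mem_singleton] at hy
    rcases hy with hy | hy | hy
    · exact absurd hy.symm hdist.1
    · exact Or.inl ⟨rfl, hy⟩
    · exact Or.inr ⟨rfl, hy⟩
  · rintro (⟨rfl, rfl⟩ | ⟨rfl, rfl⟩)
    · refine ⟨?_, by rw [hc]⟩
      simp only [goodPairs, Finset.mem_filter, Finset.mem_univ, true_and]
      exact ⟨hd.1.symm, fun e => hd.2.1 (by linear_combination e - h)⟩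
    · refine ⟨?_, by rw [hb, Finset.pair_comm]⟩
      simp only [goodPairs, Finset.mem_filter, Finset.mem_univ, true_and]
      exact ⟨hd.2.1.symm, fun e => hd.1 (by linear_combination e - h)⟩

/-- For every even positive integer `n`, the number of 3-element subsets `{i,j,k}` of
`ℤ/nℤ` satisfying at least one of `2i+j+k ≡ 1`, `i+2j+k ≡ 1`, `i+j+2k ≡ 1 (mod n)`
equals `n(n−2)/2`. -/
theorem stmt_5 (n : ℕ) [NeZero n] (heven : Even n) :
    2 * ((Finset.univ : Finset (Finset (ZMod n))).filter
        (fun T => T.card = 3 ∧ ∃ i j k : ZMod n, T = {i, j, k} ∧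
          (2 * i + j + k = 1 ∨ i + 2 * j + k = 1 ∨ i + j + 2 * k = 1))).card
      = n * (n - 2) := by
  rw [← card_goodPairs heven]
  -- Count the good pairs along `(a, b) ↦ {a, b, 1 - 2a - b}`, all of whose fibres have two elements.
  rw [Finset.card_eq_sum_card_fiberwise
    (f := fun p : ZMod n × ZMod n => ({p.1, p.2, 1 - 2 * p.1 - p.2} : Finset (ZMod n)))
    (s := goodPairs n)
    (t := (Finset.univ : Finset (Finset (ZMod n))).filter
        (fun T => T.card = 3 ∧ ∃ i j k : ZMod n, T = {i, j, k} ∧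
          (2 * i + j + k = 1 ∨ i + 2 * j + k = 1 ∨ i + j + 2 * k = 1)))]
  · rw [Finset.sum_const_nat (m := 2), mul_comm]
    intro T hT
    obtain ⟨h3, hex⟩ := (Finset.mem_filter.1 hT).2
    obtain ⟨a, b, c, rfl, h⟩ := exists_distinguished hex
    have hd := distinct_of_card h3
    rw [fiber_eq heven hd h]
    exact Finset.card_pair (by simpa using hd.2.2)
  · rintro ⟨a, b⟩ hp
    have hd := distinct_of_mem_goodPairs heven (Finset.mem_coe.1 hp)
    refine Finset.mem_coe.2 (Finset.mem_filter.2 ⟨Finset.mem_univ _, ?_, ?_⟩)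
    · exact Finset.card_eq_three.2 ⟨_, _, _, hd.1, hd.2.1, hd.2.2, rfl⟩
    · exact ⟨a, b, 1 - 2 * a - b, rfl, Or.inl (by ring)⟩
end

section
/- For every integer r > 4 there exists a constant C > 0 such that for every positive integer d, setting n = 2^d, there exists an r-graph on n vertices which is F_r(r+1,2)-free and F_r(r+2,3)-free and has at least (1/r)·C(n,r−1) − C·n^{r−2} edges. -/
open Finset

section ZeroSum

variable {V G : Type*} [Fintype V] [DecidableEq V] [AddCommGroup G] [DecidableEq G]

/-- The `r`-subsets of `V` whose labels under `φ` sum to zero and which have no `4`-subset whose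
labels sum to zero. -/
def zeroSumGraph (φ : V ≃ G) (r : ℕ) : Finset (Finset V) :=
  univ.filter fun e =>
    e.card = r ∧ ∑ x ∈ e, φ x = 0 ∧ ∀ T ⊆ e, T.card = 4 → ∑ x ∈ T, φ x ≠ 0

/-- The `k`-subsets of `V` with no nonempty subset whose labels sum to zero; for `G` an
`𝔽₂`-vector space these are the linearly independent `k`-sets. -/
def indepSets (φ : V ≃ G) (k : ℕ) : Finset (Finset V) :=
  (powersetCard k univ).filter fun A => ∀ B ⊆ A, B.Nonempty → ∑ x ∈ B, φ x ≠ 0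

lemma mem_zeroSumGraph {φ : V ≃ G} {r : ℕ} {e : Finset V} :
    e ∈ zeroSumGraph φ r ↔
      e.card = r ∧ ∑ x ∈ e, φ x = 0 ∧ ∀ T ⊆ e, T.card = 4 → ∑ x ∈ T, φ x ≠ 0 := by
  simp [zeroSumGraph]

lemma card_union_of_mem_zeroSumGraph {φ : V ≃ G} {r : ℕ} {e f : Finset V}
    (he : e ∈ zeroSumGraph φ r) (hf : f ∈ zeroSumGraph φ r) (hne : e ≠ f) :
    r + 2 ≤ (e ∪ f).card := by
  obtain ⟨hec, hes, -⟩ := mem_zeroSumGraph.1 he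
  obtain ⟨hfc, hfs, -⟩ := mem_zeroSumGraph.1 hf
  by_contra hlt
  have h1 : (e \ f).card + f.card = (e ∪ f).card := card_sdiff_add_card e f
  have h2 : (f \ e).card + e.card = (f ∪ e).card := card_sdiff_add_card f e
  rw [union_comm f e] at h2
  have h3 : (e \ f).card ≠ 0 := by
    intro h0
    rw [card_eq_zero, sdiff_eq_empty_iff_subset] at h0
    exact hne (eq_of_subset_of_card_le h0 (by omega))
  obtain ⟨x, hx⟩ := card_eq_one.1 (show (e \ f).card = 1 by omega)
  obtain ⟨y, hy⟩ := card_eq_one.1 (show (f \ e).card = 1 by omega)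
  have s1 := sum_inter_add_sum_sdiff e f (fun x => φ x)
  have s2 := sum_inter_add_sum_sdiff f e (fun x => φ x)
  rw [hx, sum_singleton, hes] at s1
  rw [hy, sum_singleton, hfs, inter_comm] at s2
  have hxy : x = y := φ.injective (add_left_cancel (s1.trans s2.symm))
  have hxe : x ∈ e \ f := by simp [hx]
  have hyf : y ∈ f \ e := by simp [hy]
  rw [mem_sdiff] at hxe hyf
  exact hxe.2 (hxy ▸ hyf.1)

lemma zeroSumGraph_free_two (φ : V ≃ G) (r : ℕ) : FrFree (zeroSumGraph φ r) (r + 1) 2 := by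
  rintro ⟨S, hS, hc, hu⟩
  obtain ⟨e, f, hne, rfl⟩ := card_eq_two.1 hc
  have := card_union_of_mem_zeroSumGraph (hS (by simp)) (hS (by simp)) hne
  simp only [biUnion_insert, singleton_biUnion, id] at hu
  omega

lemma zeroSumGraph_free_three (h2 : ∀ g : G, g + g = 0) (φ : V ≃ G) (r : ℕ) :
    FrFree (zeroSumGraph φ r) (r + 2) 3 := by
  rintro ⟨S, hS, hc, hu⟩
  obtain ⟨a, b, c, hab, hac, hbc, rfl⟩ := card_eq_three.1 hc
  have ha : a ∈ zeroSumGraph φ r := hS (by simp)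
  have hb : b ∈ zeroSumGraph φ r := hS (by simp)
  have hc' : c ∈ zeroSumGraph φ r := hS (by simp)
  simp only [biUnion_insert, singleton_biUnion, id] at hu
  set W := a ∪ (b ∪ c) with hW
  have haW : a ⊆ W := subset_union_left
  have hbW : b ⊆ W := subset_union_left.trans subset_union_right
  have hcW : c ⊆ W := subset_union_right.trans subset_union_right
  -- Any two of the three edges already cover `W`.
  have eab : a ∪ b = W := eq_of_subset_of_card_le (union_subset haW hbW)
    (hu.trans (card_union_of_mem_zeroSumGraph ha hb hab))
  have eac : a ∪ c = W := eq_of_subset_of_card_le (union_subset haW hcW)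
    (hu.trans (card_union_of_mem_zeroSumGraph ha hc' hac))
  have ebc : b ∪ c = W := eq_of_subset_of_card_le (union_subset hbW hcW)
    (hu.trans (card_union_of_mem_zeroSumGraph hb hc' hbc))
  have hWc : W.card = r + 2 :=
    le_antisymm hu (eab ▸ card_union_of_mem_zeroSumGraph ha hb hab)
  obtain ⟨-, -, haT⟩ := mem_zeroSumGraph.1 ha
  obtain ⟨hbcard, hbs, -⟩ := mem_zeroSumGraph.1 hb
  obtain ⟨hccard, hcs, -⟩ := mem_zeroSumGraph.1 hc'
  have hdisj : Disjoint (W \ b) (W \ c) := by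
    rw [disjoint_left]
    intro x hx hx'
    rw [mem_sdiff] at hx hx'
    have := hx.1
    rw [← ebc, mem_union] at this
    exact this.elim hx.2 hx'.2
  have s1 := sum_sdiff (f := fun x => φ x) hbW
  have s2 := sum_sdiff (f := fun x => φ x) hcW
  rw [hbs, add_zero] at s1
  rw [hcs, add_zero] at s2
  refine haT (W \ b ∪ W \ c) (union_subset ?_ ?_) ?_ ?_
  · rw [← eab, union_sdiff_right]; exact sdiff_subset
  · rw [← eac, union_sdiff_right]; exact sdiff_subset
  · rw [card_union_of_disjoint hdisj, card_sdiff_of_subset hbW, card_sdiff_of_subset hcW]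
    omega
  · rw [sum_union hdisj, s1, s2, h2]

/-- A dependent `(k+1)`-set is recovered from a `k`-subset `A'` and the subset of `A'` whose sum is
the remaining point. -/
lemma choose_le_card_indepSets (h2 : ∀ g : G, g + g = 0) (φ : V ≃ G) (k : ℕ) :
    (Fintype.card V).choose (k + 1) ≤
      (indepSets φ (k + 1)).card + (Fintype.card V) ^ k * 2 ^ k := by
  set bad := (powersetCard (k + 1) (univ : Finset V)).filter
    fun A => ¬ ∀ B ⊆ A, B.Nonempty → ∑ x ∈ B, φ x ≠ 0 with hbad
  have hsplit : (indepSets φ (k + 1)).card + bad.card = (Fintype.card V).choose (k + 1) := by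
    rw [indepSets, hbad, card_filter_add_card_filter_not, card_powersetCard, card_univ]
  have hsub : bad ⊆ (powersetCard k (univ : Finset V)).biUnion fun A' =>
      A'.powerset.image fun B' => insert (φ.symm (∑ x ∈ B', φ x)) A' := by
    intro A hA
    simp only [hbad, mem_filter, mem_powersetCard, subset_univ, true_and] at hA
    obtain ⟨hAc, hA⟩ := hA
    push Not at hA
    obtain ⟨B, hBA, ⟨b, hb⟩, hB0⟩ := hA
    simp only [mem_biUnion, mem_powersetCard, subset_univ, true_and, mem_image, mem_powerset]
    refine ⟨A.erase b, by rw [card_erase_of_mem (hBA hb)]; omega, B.erase b,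
      erase_subset_erase b hBA, ?_⟩
    have hs := add_sum_erase B (fun x => φ x) hb
    have : ∑ x ∈ B.erase b, φ x = φ b :=
      add_left_cancel ((hs.trans hB0).trans (h2 (φ b)).symm)
    rw [this, Equiv.symm_apply_apply, insert_erase (hBA hb)]
  have hcard : bad.card ≤ (powersetCard k (univ : Finset V)).card * 2 ^ k := by
    refine (card_le_card hsub).trans (card_biUnion_le_card_mul _ _ _ ?_)
    intro A' hA'
    refine card_image_le.trans ?_
    rw [card_powerset, (mem_powersetCard.1 hA').2]
  have hch : (powersetCard k (univ : Finset V)).card ≤ (Fintype.card V) ^ k := by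
    rw [card_powersetCard, card_univ]
    exact Nat.choose_le_pow _ _
  have := hcard.trans (Nat.mul_le_mul_right (2 ^ k) hch)
  omega

/-- Independent sets complete to edges by adding the point labelled by their sum. -/
lemma card_indepSets_le (h2 : ∀ g : G, g + g = 0) (φ : V ≃ G) (k : ℕ) (hk : 4 ≤ k) :
    (indepSets φ k).card ≤ (k + 1) * (zeroSumGraph φ (k + 1)).card := by
  -- The completion maps to edges, and its fibre over `e` consists of sets `e.erase x`.
  have hsub : indepSets φ k ⊆ (zeroSumGraph φ (k + 1)).biUnion fun e =>
      e.image fun x => e.erase x := by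
    intro A hA
    simp only [indepSets, mem_filter, mem_powersetCard, subset_univ, true_and] at hA
    obtain ⟨hAc, hA⟩ := hA
    set σ := φ.symm (∑ x ∈ A, φ x) with hσ
    have hφσ : φ σ = ∑ x ∈ A, φ x := by simp [hσ]
    -- A proper subset of `A` cannot have the same sum as `A`, since its complement in `A`
    -- would have sum zero.
    have key : ∀ T ⊆ A, T.card < k → ∑ x ∈ T, φ x ≠ φ σ := by
      intro T hT hTc hs
      refine hA (A \ T) sdiff_subset ?_ ?_
      · rw [← card_pos, card_sdiff_of_subset hT]; omega
      · have := sum_sdiff (f := fun x => φ x) hT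
        rw [hs, hφσ] at this
        simpa using this
    have hσA : σ ∉ A := by
      intro hmem
      exact key {σ} (by simpa using hmem) (by simp; omega) (by simp)
    simp only [mem_biUnion, mem_image]
    refine ⟨insert σ A, mem_zeroSumGraph.2 ⟨by rw [card_insert_of_notMem hσA, hAc], ?_, ?_⟩,
      σ, mem_insert_self _ _, erase_insert hσA⟩
    · rw [sum_insert hσA, hφσ, h2]
    · intro T hT hTc hT0
      by_cases hσT : σ ∈ T
      · have hs := add_sum_erase T (fun x => φ x) hσT
        refine key (T.erase σ) (by rwa [← subset_insert_iff])
          (by rw [card_erase_of_mem hσT]; omega) ?_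
        exact add_left_cancel ((hs.trans hT0).trans (h2 (φ σ)).symm)
      · refine hA T ((subset_insert_iff_of_notMem hσT).1 hT) ?_ hT0
        rw [← card_pos]; omega
  rw [mul_comm]
  refine (card_le_card hsub).trans (card_biUnion_le_card_mul _ _ _ ?_)
  intro e he
  exact card_image_le.trans (mem_zeroSumGraph.1 he).1.le

end ZeroSum

/-- For every integer `r > 4` there exists a constant `C > 0` such that for every
positive integer `d`, setting `n = 2^d`, there is an `r`-graph on `n` vertices which is
`F_r(r+1,2)`-free and `F_r(r+2,3)`-free and has at least `(1/r)·C(n,r−1) − C·n^(r−2)`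
edges. -/
theorem stmt_7 (r : ℕ) (hr : 4 < r) :
    ∃ C : ℝ, 0 < C ∧ ∀ d : ℕ, 0 < d →
      ∃ H : Finset (Finset (Fin (2 ^ d))),
        (∀ A ∈ H, A.card = r) ∧
        FrFree H (r + 1) 2 ∧ FrFree H (r + 2) 3 ∧
        (1 / r : ℝ) * ((2 ^ d).choose (r - 1)) - C * (2 ^ d : ℝ) ^ (r - 2) ≤ H.card := by
  obtain ⟨k, rfl⟩ : ∃ k, r = k + 2 := ⟨r - 2, by omega⟩
  refine ⟨2 ^ k / ((k + 2 : ℕ) : ℝ), by positivity, fun d _ => ?_⟩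
  have h2 : ∀ g : Fin d → ZMod 2, g + g = 0 := fun g => funext fun i => CharTwo.add_self_eq_zero _
  let φ : Fin (2 ^ d) ≃ (Fin d → ZMod 2) :=
    Fintype.equivOfCardEq (by simp [ZMod.card])
  refine ⟨zeroSumGraph φ (k + 2), fun A hA => (mem_zeroSumGraph.1 hA).1,
    zeroSumGraph_free_two φ _, zeroSumGraph_free_three h2 φ _, ?_⟩
  have h := (choose_le_card_indepSets h2 φ k).trans
    (Nat.add_le_add_right (card_indepSets_le h2 φ (k + 1) (by omega)) _)
  rw [Fintype.card_fin] at h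
  have hR : (((2 ^ d).choose (k + 1) : ℕ) : ℝ) ≤
      ((k + 2 : ℕ) : ℝ) * (zeroSumGraph φ (k + 2)).card + (2 ^ d : ℝ) ^ k * 2 ^ k := by
    exact_mod_cast h
  have hpos : (0 : ℝ) < ((k + 2 : ℕ) : ℝ) := by positivity
  rw [show k + 2 - 1 = k + 1 from rfl, show k + 2 - 2 = k from rfl]
  rw [one_div_mul_eq_div, div_mul_eq_mul_div, ← sub_div, div_le_iff₀ hpos]
  linarith
end

section
/- For every integer r > 4 and every positive integer d, in the r-graph H_d every (r−1)-element subset of (ℤ/2ℤ)^d is contained in at most one edge; in particular H_d is F_r(r+1,2)-free. -/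
/-- `H_d`: the `r`-graph on vertex set `(ℤ/2ℤ)^d` whose edges are the `r`-element
zero-sum subsets containing no zero-sum subset of size `4` and none of size `r − 4`. -/
def Hd (r d : ℕ) : Finset (Finset (Fin d → ZMod 2)) :=
  Finset.univ.filter (fun A => A.card = r ∧ A.sum id = 0 ∧
    ∀ B ∈ A.powerset, (B.card = 4 ∨ B.card = r - 4) → B.sum id ≠ 0)

/-- An edge is determined by any `r - 1` of its vertices, the last one being minus their sum. -/
lemma Hd_eq_of_subset {r d : ℕ} (hr : 0 < r) {A B T : Finset (Fin d → ZMod 2)}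
    (hA : A ∈ Hd r d) (hB : B ∈ Hd r d) (hT : T.card = r - 1) (hTA : T ⊆ A) (hTB : T ⊆ B) :
    A = B := by
  have key : ∀ C ∈ Hd r d, T ⊆ C → C = insert (-(T.sum id)) T := by
    intro C hC hTC
    simp only [Hd, Finset.mem_filter, Finset.mem_univ, true_and] at hC
    obtain ⟨hcard, hsum, -⟩ := hC
    obtain ⟨c, hcT, rfl⟩ := (Finset.covBy_iff_exists_insert).1
      (Finset.covBy_iff_card_sdiff_eq_one.2 ⟨hTC, by rw [Finset.card_sdiff_of_subset hTC]; omega⟩)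
    rw [Finset.sum_insert hcT] at hsum
    rw [← eq_neg_of_add_eq_zero_left hsum, id]
  rw [key A hA hTA, key B hB hTB]

/-- For every integer `r > 4` and every positive integer `d`, in the `r`-graph `H_d`
every `(r−1)`-element subset of `(ℤ/2ℤ)^d` is contained in at most one edge; in
particular `H_d` is `F_r(r+1,2)`-free. -/
theorem stmt_8 (r d : ℕ) (hr : 4 < r) (hd : 0 < d) :
    (∀ T : Finset (Fin d → ZMod 2), T.card = r - 1 →
      ((Hd r d).filter (fun A => T ⊆ A)).card ≤ 1) ∧
    FrFree (Hd r d) (r + 1) 2 := by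
  refine ⟨fun T hT => ?_, ?_⟩
  · refine Finset.card_le_one.2 fun A hA B hB => ?_
    rw [Finset.mem_filter] at hA hB
    exact Hd_eq_of_subset (by omega) hA.1 hB.1 hT hA.2 hB.2
  · rintro ⟨S, hS, hS2, hv⟩
    obtain ⟨A, B, hAB, rfl⟩ := Finset.card_eq_two.1 hS2
    have hA : A ∈ Hd r d := hS (by simp)
    have hB : B ∈ Hd r d := hS (by simp)
    have hAr : A.card = r := (Finset.mem_filter.1 hA).2.1
    have hBr : B.card = r := (Finset.mem_filter.1 hB).2.1
    have hU : (A ∪ B).card ≤ r + 1 := by simpa [Finset.biUnion_insert] using hv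
    have hI := Finset.card_union_add_card_inter A B
    obtain ⟨T, hTI, hT⟩ := Finset.exists_subset_card_eq (show r - 1 ≤ (A ∩ B).card by omega)
    exact hAB (Hd_eq_of_subset (by omega) hA hB hT (hTI.trans Finset.inter_subset_left)
      (hTI.trans Finset.inter_subset_right))
end

section
/- For every integer r > 4 and every positive integer d, the r-graph H_d is F_r(r+2,3)-free; that is, there do not exist three distinct edges of H_d whose union contains at most r+2 vertices. -/
lemma sum_sdiff_eq_of_zero_sum {G : Type*} [AddCommGroup G] [DecidableEq G] {A B : Finset G}
    (hA : A.sum id = 0) (hB : B.sum id = 0) : (A \ B).sum id = (B \ A).sum id := by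
  have h1 := Finset.sum_inter_add_sum_sdiff A B (id : G → G)
  have h2 := Finset.sum_inter_add_sum_sdiff B A (id : G → G)
  rw [hA] at h1
  rw [hB, Finset.inter_comm, ← h1] at h2
  exact (add_left_cancel h2).symm

/-- Two distinct zero-sum sets of size `r` differ in at least two elements each way, because equal
sums force `A \ B` and `B \ A` to coincide when they are singletons. -/
lemma add_two_le_card_union {G : Type*} [AddCommGroup G] [DecidableEq G] {A B : Finset G} {r : ℕ}
    (hAB : A ≠ B) (hAr : A.card = r) (hBr : B.card = r)
    (hA : A.sum id = 0) (hB : B.sum id = 0) : r + 2 ≤ (A ∪ B).card := by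
  have hs := sum_sdiff_eq_of_zero_sum hA hB
  have h1 := Finset.card_sdiff_add_card A B
  have h2 := Finset.card_sdiff_add_card B A
  rw [Finset.union_comm] at h2
  by_contra! hlt
  obtain h0 | h0 : (B \ A).card = 0 ∨ (B \ A).card = 1 := by omega
  · have hBA : B ⊆ A := by
      rwa [Finset.card_eq_zero, Finset.sdiff_eq_empty_iff_subset] at h0
    exact hAB (Finset.eq_of_subset_of_card_le hBA (by omega)).symm
  · obtain ⟨b, hb⟩ := Finset.card_eq_one.1 h0
    obtain ⟨a, ha⟩ := Finset.card_eq_one.1 (show (A \ B).card = 1 by omega)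
    rw [ha, hb] at hs
    have hab : a = b := by simpa using hs
    have haA : a ∈ A \ B := by simp [ha]
    have hbB : b ∈ B \ A := by simp [hb]
    rw [Finset.mem_sdiff] at haA hbB
    exact hbB.2 (hab ▸ haA.1)

/-- For every integer `r > 4` and every positive integer `d`, the `r`-graph `H_d` is
`F_r(r+2,3)`-free: there do not exist three distinct edges of `H_d` whose union
contains at most `r+2` vertices. -/
theorem stmt_9 (r d : ℕ) (hr : 4 < r) (hd : 0 < d) :
    FrFree (Hd r d) (r + 2) 3 := by
  rintro ⟨S, hS, hcard, hU⟩
  obtain ⟨A, B, C, hAB, hAC, hBC, rfl⟩ := Finset.card_eq_three.1 hcard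
  have edge : ∀ X ∈ ({A, B, C} : Finset (Finset (Fin d → ZMod 2))),
      X.card = r ∧ X.sum id = 0 ∧
        ∀ Y ∈ X.powerset, (Y.card = 4 ∨ Y.card = r - 4) → Y.sum id ≠ 0 :=
    fun X hX => (Finset.mem_filter.1 (hS hX)).2
  obtain ⟨hAr, hA, hA4⟩ := edge A (by simp)
  obtain ⟨hBr, hB, -⟩ := edge B (by simp)
  obtain ⟨hCr, hC, -⟩ := edge C (by simp)
  set U := ({A, B, C} : Finset (Finset (Fin d → ZMod 2))).biUnion id with hUdef
  have sub : ∀ X ∈ ({A, B, C} : Finset (Finset (Fin d → ZMod 2))), X ⊆ U :=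
    fun X hX => Finset.subset_biUnion_of_mem id hX
  have hAU := sub A (by simp)
  have hBU := sub B (by simp)
  have hCU := sub C (by simp)
  have hABU : A ∪ B = U := Finset.eq_of_subset_of_card_le (Finset.union_subset hAU hBU)
    (hU.trans (add_two_le_card_union hAB hAr hBr hA hB))
  have hACU : A ∪ C = U := Finset.eq_of_subset_of_card_le (Finset.union_subset hAU hCU)
    (hU.trans (add_two_le_card_union hAC hAr hCr hA hC))
  have hBCge := add_two_le_card_union hBC hBr hCr hB hC
  have hBCle := (Finset.card_le_card (Finset.union_subset hBU hCU)).trans hU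
  have h1 := Finset.card_sdiff_add_card B C
  have h2 := Finset.card_sdiff_add_card C B
  rw [Finset.union_comm] at h2
  have hdisj : Disjoint (B \ C) (C \ B) := disjoint_sdiff_sdiff
  refine hA4 (B \ C ∪ C \ B) ?_ (Or.inl ?_) ?_
  · rw [Finset.mem_powerset]
    intro x hx
    rw [Finset.mem_union, Finset.mem_sdiff, Finset.mem_sdiff] at hx
    rcases hx with ⟨hxB, hxC⟩ | ⟨hxC, hxB⟩
    · have hx : x ∈ A ∪ C := hACU ▸ hBU hxB
      exact (Finset.mem_union.1 hx).resolve_right hxC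
    · have hx : x ∈ A ∪ B := hABU ▸ hCU hxC
      exact (Finset.mem_union.1 hx).resolve_right hxB
  · rw [Finset.card_union_of_disjoint hdisj]
    omega
  · rw [Finset.sum_union hdisj, sum_sdiff_eq_of_zero_sum hB hC]
    funext i
    exact CharTwo.add_self_eq_zero _
end

section
/- For every positive integer d and every integer k ≥ 1, setting n = 2^d, the number of k-element zero-sum subsets of (ℤ/2ℤ)^d is at most (1/k)·C(n,k−1). -/
/-!
Deleting a point `x` from a zero-sum `k`-set `S` gives a `(k-1)`-set `T` with `x = -∑ T`, so the
pair `(S, x)` is recovered from `T`. Hence the `k · N` pairs `(S, x)` with `x ∈ S` inject into the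
`(k-1)`-subsets, and `k · N ≤ C(n, k-1)`.
-/

/-- The double count behind the bound, valid in every finite abelian group. -/
lemma mul_card_zeroSum_le {G : Type*} [AddCommGroup G] [Fintype G] [DecidableEq G] (k : ℕ) :
    ((Finset.univ : Finset (Finset G)).filter
        (fun S => S.card = k ∧ S.sum id = 0)).card * k
      ≤ (Fintype.card G).choose (k - 1) := by
  set F := (Finset.univ : Finset (Finset G)).filter (fun S => S.card = k ∧ S.sum id = 0) with hF
  have hcard : (F.sigma (fun S => S)).card = F.card * k := by
    rw [Finset.card_sigma]
    exact Finset.sum_const_nat (fun S hS => (Finset.mem_filter.1 hS).2.1)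
  rw [← hcard, ← Finset.card_univ, ← Finset.card_powersetCard]
  refine Finset.card_le_card_of_injOn (fun p => p.1.erase p.2) ?_ ?_
  · rintro ⟨S, x⟩ h
    obtain ⟨hS, hx⟩ := Finset.mem_sigma.1 h
    have hSk := (Finset.mem_filter.1 hS).2.1
    have : (S.erase x).card = k - 1 := by rw [Finset.card_erase_of_mem hx, hSk]
    exact Finset.mem_coe.2 (Finset.mem_powersetCard.2 ⟨Finset.subset_univ _, this⟩)
  · rintro ⟨S, x⟩ h ⟨S', x'⟩ h' heq
    obtain ⟨hS, hx⟩ := Finset.mem_sigma.1 h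
    obtain ⟨hS', hx'⟩ := Finset.mem_sigma.1 h'
    have h0 := (Finset.mem_filter.1 hS).2.2
    have h0' := (Finset.mem_filter.1 hS').2.2
    dsimp only at heq hx hx' h0 h0'
    rw [← Finset.add_sum_erase _ _ hx] at h0
    rw [← Finset.add_sum_erase _ _ hx', ← heq] at h0'
    have hxx : x = x' := add_right_cancel (h0.trans h0'.symm)
    subst hxx
    have hSS : S = S' := by rw [← Finset.insert_erase hx, heq, Finset.insert_erase hx']
    subst hSS
    rfl

/-- For every positive integer `d` and every integer `k ≥ 1`, setting `n = 2^d`, the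
number of `k`-element zero-sum subsets of `(ℤ/2ℤ)^d` is at most `(1/k)·C(n,k−1)`. -/
theorem stmt_10 (d k : ℕ) (hd : 0 < d) (hk : 1 ≤ k) :
    (((Finset.univ : Finset (Finset (Fin d → ZMod 2))).filter
        (fun S => S.card = k ∧ S.sum id = 0)).card : ℝ)
      ≤ (1 / k : ℝ) * ((2 ^ d).choose (k - 1)) := by
  have h := mul_card_zeroSum_le (G := Fin d → ZMod 2) k
  have hn : Fintype.card (Fin d → ZMod 2) = 2 ^ d := by simp [ZMod.card]
  rw [hn] at h
  have hk' : (0 : ℝ) < k := by exact_mod_cast hk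
  rw [one_div_mul_eq_div, le_div_iff₀ hk']
  exact_mod_cast h
end

section
/- For every integer r > 4 there exists a constant C > 0 such that for all positive integers m and d, setting n = m·2^d, there exists an r-graph on n vertices which is F_r(r+1,2)-free and F_r(r+2,3)-free and has at least (1/r − C/2^d)·C(n,r−1) edges. -/
open Finset

section Construction

/-! ### Tuples and sums of their subfamilies -/

variable {V Z : Type*} [AddCommGroup V] [AddCommGroup Z]

/-- Fibres of a surjective homomorphism are equinumerous. -/
lemma card_ker_mul {X Y : Type*} [AddCommGroup X] [AddCommGroup Y] [Fintype X] [Fintype Y]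
    [DecidableEq Y] (φ : X →+ Y) (hφ : Function.Surjective φ) :
    (univ.filter fun x => φ x = 0).card * Fintype.card Y = Fintype.card X := by
  have h := AddSubgroup.card_eq_card_quotient_mul_card_addSubgroup φ.ker
  rw [Nat.card_congr (QuotientAddGroup.quotientKerEquivOfSurjective φ hφ).toEquiv] at h
  rw [← Nat.card_eq_fintype_card, ← Nat.card_eq_fintype_card, h, mul_comm]
  congr 1
  rw [← Fintype.card_subtype, ← Nat.card_eq_fintype_card]
  rfl

/-- The homomorphism sending a family to its total sum. -/
def totalSum (V : Type*) [AddCommGroup V] (r : ℕ) : (Fin r → V) →+ V where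
  toFun g := ∑ i, g i
  map_zero' := by simp
  map_add' := by simp [sum_add_distrib]

/-- The homomorphism sending a family to the `π`-image of its sum over `J`. -/
def partialSum (π : V →+ Z) {r : ℕ} (J : Finset (Fin r)) : (Fin r → V) →+ Z where
  toFun g := π (∑ i ∈ J, g i)
  map_zero' := by simp
  map_add' := by simp [sum_add_distrib]

/-- The nonempty proper subsets of the index set `Fin r`. -/
def properSets (r : ℕ) : Finset (Finset (Fin r)) :=
  univ.filter fun J => J.Nonempty ∧ J ≠ univ

lemma prod_surjective (π : V →+ Z) (hπ : Function.Surjective π) {r : ℕ} {J : Finset (Fin r)}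
    (hJ : J ∈ properSets r) :
    Function.Surjective ((totalSum V r).prod (partialSum π J)) := by
  obtain ⟨⟨j, hj⟩, hJ'⟩ := (mem_filter.1 hJ).2
  obtain ⟨i, hi⟩ : ∃ i, i ∉ J := by
    by_contra! h
    exact hJ' (eq_univ_iff_forall.2 h)
  rintro ⟨v, z⟩
  obtain ⟨u, rfl⟩ := hπ z
  refine ⟨Pi.single j u + Pi.single i (v - u), ?_⟩
  ext
  · simp [totalSum, sum_add_distrib]
  · change π (∑ k ∈ J, ((Pi.single j u : Fin r → V) k + (Pi.single i (v - u) : Fin r → V) k)) = π u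
    rw [sum_add_distrib, sum_pi_single', sum_pi_single', if_pos hj, if_neg hi, add_zero]

/-! ### The hypergraph and its freeness -/

variable [DecidableEq V]

/-- Two `r`-sets with equal sums cannot differ in exactly one element. -/
lemma card_union_of_sum_eq {r : ℕ} {A B : Finset V} (hA : A.card = r) (hB : B.card = r)
    (hs : ∑ x ∈ A, x = ∑ x ∈ B, x) (hAB : A ≠ B) : r + 2 ≤ (A ∪ B).card := by
  by_contra! hlt
  have h1 : (A \ B).card + B.card = (A ∪ B).card := card_sdiff_add_card A B
  have h2 : (B \ A).card + A.card = (B ∪ A).card := card_sdiff_add_card B A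
  rw [union_comm B A] at h2
  have hne : (A \ B).Nonempty := by
    rw [sdiff_nonempty]
    intro hsub
    exact hAB (eq_of_subset_of_card_le hsub (by omega))
  have hpos := hne.card_pos
  obtain ⟨a, ha⟩ := card_eq_one.1 (show (A \ B).card = 1 by omega)
  obtain ⟨b, hb⟩ := card_eq_one.1 (show (B \ A).card = 1 by omega)
  have e1 := sum_inter_add_sum_sdiff A B (fun x => x)
  have e2 := sum_inter_add_sum_sdiff B A (fun x => x)
  rw [ha, sum_singleton] at e1
  rw [hb, sum_singleton, inter_comm] at e2
  have hab : a = b := by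
    have : ∑ x ∈ A ∩ B, x + a = ∑ x ∈ A ∩ B, x + b := by rw [e1, e2, hs]
    exact add_left_cancel this
  have ha' : a ∈ A \ B := by rw [ha]; exact mem_singleton_self a
  have hb' : b ∈ B \ A := by rw [hb]; exact mem_singleton_self b
  rw [mem_sdiff] at ha' hb'
  exact hb'.2 (hab ▸ ha'.1)

variable [Fintype V] [DecidableEq Z]

/-- The `r`-subsets of `V` with sum zero, none of whose `(r - 4)`-subsets has its sum in `ker π`. -/
def edges (π : V →+ Z) (r : ℕ) : Finset (Finset V) :=
  (univ.powersetCard r).filter fun A =>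
    ∑ x ∈ A, x = 0 ∧ ∀ Q ⊆ A, Q.card = r - 4 → π (∑ x ∈ Q, x) ≠ 0

lemma mem_edges {π : V →+ Z} {r : ℕ} {A : Finset V} : A ∈ edges π r ↔
    A.card = r ∧ ∑ x ∈ A, x = 0 ∧ ∀ Q ⊆ A, Q.card = r - 4 → π (∑ x ∈ Q, x) ≠ 0 := by
  simp [edges, mem_powersetCard]

lemma edges_free_two (π : V →+ Z) (r : ℕ) : FrFree (edges π r) (r + 1) 2 := by
  rintro ⟨S, hS, hc, hu⟩
  obtain ⟨A, B, hAB, rfl⟩ := card_eq_two.1 hc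
  obtain ⟨hA, hA0, -⟩ := mem_edges.1 (hS (by simp : A ∈ ({A, B} : Finset (Finset V))))
  obtain ⟨hB, hB0, -⟩ := mem_edges.1 (hS (by simp : B ∈ ({A, B} : Finset (Finset V))))
  have := card_union_of_sum_eq hA hB (hA0.trans hB0.symm) hAB
  simp only [biUnion_insert, singleton_biUnion, id] at hu
  omega

lemma edges_free_three (h2 : ∀ z : Z, z + z = 0) (π : V →+ Z) (r : ℕ) (hr : 4 < r) :
    FrFree (edges π r) (r + 2) 3 := by
  rintro ⟨S, hS, hc, hu⟩
  obtain ⟨A, B, D, hAB, hAD, hBD, rfl⟩ := card_eq_three.1 hc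
  obtain ⟨hA, hA0, hAQ⟩ := mem_edges.1 (hS (by simp : A ∈ ({A, B, D} : Finset (Finset V))))
  obtain ⟨hB, hB0, -⟩ := mem_edges.1 (hS (by simp : B ∈ ({A, B, D} : Finset (Finset V))))
  obtain ⟨hD, hD0, -⟩ := mem_edges.1 (hS (by simp : D ∈ ({A, B, D} : Finset (Finset V))))
  simp only [biUnion_insert, singleton_biUnion, id] at hu
  have cAB := card_union_of_sum_eq hA hB (hA0.trans hB0.symm) hAB
  have cAD := card_union_of_sum_eq hA hD (hA0.trans hD0.symm) hAD
  have cBD := card_union_of_sum_eq hB hD (hB0.trans hD0.symm) hBD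
  set W := A ∪ (B ∪ D) with hW
  have wAB : A ∪ B = W := eq_of_subset_of_card_le (by intro x; simp [hW]; tauto) (by omega)
  have wAD : A ∪ D = W := eq_of_subset_of_card_le (by intro x; simp [hW]; tauto) (by omega)
  have wBD : B ∪ D = W := eq_of_subset_of_card_le subset_union_right (by omega)
  have hWc : W.card = r + 2 := by rw [wAB] at cAB; omega
  have sA : A ⊆ W := wAB ▸ subset_union_left
  have sB : B ⊆ W := wAB ▸ subset_union_right
  have sD : D ⊆ W := wAD ▸ subset_union_right
  have key : ∀ x, x ∈ W → (x ∈ A ∨ x ∈ B) ∧ (x ∈ A ∨ x ∈ D) ∧ (x ∈ B ∨ x ∈ D) := by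
    intro x hx
    refine ⟨?_, ?_, ?_⟩
    · rw [← wAB] at hx; simpa using hx
    · rw [← wAD] at hx; simpa using hx
    · rw [← wBD] at hx; simpa using hx
  -- The edge `A` is the disjoint union of `Q = A ∩ B ∩ D` and the complements of `B` and `D`.
  set Q := (A ∩ B) ∩ D with hQ
  have d1 : Disjoint Q (W \ B) := by
    rw [disjoint_left]; intro x hx; simp [hQ] at hx ⊢; tauto
  have d2 : Disjoint (Q ∪ W \ B) (W \ D) := by
    rw [disjoint_left]; intro x hx
    simp only [mem_union, mem_sdiff, hQ, mem_inter] at hx ⊢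
    have := key x
    tauto
  have hAeq : A = (Q ∪ W \ B) ∪ (W \ D) := by
    ext x
    have := key x
    have := @sA x
    simp only [mem_union, mem_sdiff, hQ, mem_inter]
    tauto
  have cB : (W \ B).card = 2 := by rw [card_sdiff_of_subset sB]; omega
  have cD : (W \ D).card = 2 := by rw [card_sdiff_of_subset sD]; omega
  have cQ : Q.card = r - 4 := by
    have := congrArg card hAeq
    rw [card_union_of_disjoint d2, card_union_of_disjoint d1] at this
    omega
  have eB : ∑ x ∈ W \ B, x = ∑ x ∈ W, x := by
    have := sum_sdiff (f := fun x => x) sB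
    rw [hB0, add_zero] at this; exact this
  have eD : ∑ x ∈ W \ D, x = ∑ x ∈ W, x := by
    have := sum_sdiff (f := fun x => x) sD
    rw [hD0, add_zero] at this; exact this
  refine hAQ Q (by intro x; simp [hQ]; tauto) cQ ?_
  have hsum : ∑ x ∈ Q, x + ∑ x ∈ W, x + ∑ x ∈ W, x = 0 := by
    rw [hAeq, sum_union d2, sum_union d1, eB, eD] at hA0
    exact hA0
  have := congrArg π hsum
  rwa [map_add, map_add, map_zero, add_assoc, h2, add_zero] at this

/-! ### Counting edges -/

/-- The zero-sum families none of whose nonempty proper subfamilies has its sum in `ker π`. -/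
def goodTuples (π : V →+ Z) (r : ℕ) : Finset (Fin r → V) :=
  univ.filter fun g => ∑ i, g i = 0 ∧ ∀ J ∈ properSets r, π (∑ i ∈ J, g i) ≠ 0

/-- Union bound over the nonempty proper index sets. -/
lemma card_goodTuples [Fintype Z] (π : V →+ Z) (hπ : Function.Surjective π) (r : ℕ) (hr : 0 < r) :
    Fintype.card V ^ r * Fintype.card Z ≤
      (goodTuples π r).card * (Fintype.card V * Fintype.card Z)
        + 2 ^ r * Fintype.card V ^ r := by
  set n := Fintype.card V
  set q := Fintype.card Z
  have h0 : (univ.filter fun g : Fin r → V => ∑ i, g i = 0).card * n = n ^ r := by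
    have := card_ker_mul (totalSum V r) (fun v => ⟨Pi.single ⟨0, hr⟩ v, by simp [totalSum]⟩)
    rw [Fintype.card_fun, Fintype.card_fin] at this
    exact this
  have hb : ∀ J ∈ properSets r, (univ.filter fun g : Fin r → V =>
      ∑ i, g i = 0 ∧ π (∑ i ∈ J, g i) = 0).card * (n * q) = n ^ r := by
    intro J hJ
    have := card_ker_mul _ (prod_surjective π hπ hJ)
    rw [Fintype.card_prod, Fintype.card_fun, Fintype.card_fin] at this
    rw [← this]
    congr 3
    ext g
    simp only [AddMonoidHom.prod_apply, Prod.mk_eq_zero]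
    rfl
  have hsub : (univ.filter fun g : Fin r → V => ∑ i, g i = 0) ⊆ goodTuples π r ∪
      (properSets r).biUnion fun J => univ.filter fun g : Fin r → V =>
        ∑ i, g i = 0 ∧ π (∑ i ∈ J, g i) = 0 := by
    intro g hg
    simp only [mem_filter, mem_univ, true_and] at hg
    by_cases h : ∀ J ∈ properSets r, π (∑ i ∈ J, g i) ≠ 0
    · exact mem_union_left _ (mem_filter.2 ⟨mem_univ _, hg, h⟩)
    · push Not at h
      obtain ⟨J, hJ, h⟩ := h
      exact mem_union_right _ (mem_biUnion.2 ⟨J, hJ, mem_filter.2 ⟨mem_univ _, hg, h⟩⟩)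
  have hcard := (card_le_card hsub).trans
    ((card_union_le _ _).trans (Nat.add_le_add_left card_biUnion_le _))
  have hP : (properSets r).card ≤ 2 ^ r := by
    refine (card_filter_le _ _).trans ?_
    simp
  calc n ^ r * q = (univ.filter fun g : Fin r → V => ∑ i, g i = 0).card * (n * q) := by
        rw [← h0, mul_assoc]
    _ ≤ _ := Nat.mul_le_mul_right _ hcard
    _ = (goodTuples π r).card * (n * q) + (properSets r).card * n ^ r := by
        rw [add_mul, sum_mul, sum_congr rfl hb, sum_const, smul_eq_mul]
    _ ≤ _ := by gcongr

lemma goodTuples_injective (h2 : ∀ z : Z, z + z = 0) (π : V →+ Z) {r : ℕ} (hr : 4 < r)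
    {g : Fin r → V} (hg : g ∈ goodTuples π r) : Function.Injective g := by
  intro i j hij
  by_contra hne
  have h := (mem_filter.1 hg).2.2 {i, j} (by
    simp only [properSets, mem_filter, mem_univ, true_and]
    refine ⟨⟨i, by simp⟩, fun h => ?_⟩
    have hc := congrArg card h
    rw [card_pair hne, card_univ, Fintype.card_fin] at hc
    omega)
  rw [sum_pair hne, hij, map_add] at h
  exact h (h2 _)

lemma image_mem_edges (h2 : ∀ z : Z, z + z = 0) (π : V →+ Z) {r : ℕ} (hr : 4 < r)
    {g : Fin r → V} (hg : g ∈ goodTuples π r) : univ.image g ∈ edges π r := by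
  have hinj := goodTuples_injective h2 π hr hg
  obtain ⟨h0, hJ⟩ := (mem_filter.1 hg).2
  refine mem_edges.2 ⟨?_, ?_, ?_⟩
  · rw [card_image_of_injective _ hinj, card_univ, Fintype.card_fin]
  · rw [sum_image hinj.injOn, h0]
  · intro Q hQ hc
    obtain ⟨J, -, rfl⟩ := subset_image_iff.1 hQ
    rw [card_image_of_injective _ hinj] at hc
    rw [sum_image hinj.injOn]
    refine hJ J ?_
    simp only [properSets, mem_filter, mem_univ, true_and]
    refine ⟨card_pos.1 (by omega), fun h => ?_⟩
    rw [h, card_univ, Fintype.card_fin] at hc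
    omega

/-- Each edge is enumerated by at most `r!` good tuples. -/
lemma card_goodTuples_le (h2 : ∀ z : Z, z + z = 0) (π : V →+ Z) {r : ℕ} (hr : 4 < r) :
    (goodTuples π r).card ≤ r.factorial * (edges π r).card := by
  refine card_le_mul_card_image_of_maps_to (f := fun g => univ.image g)
    (fun g hg => image_mem_edges h2 π hr hg) _ ?_
  intro A hA
  have hAc : Fintype.card A = r := by simpa using (mem_edges.1 hA).1
  have hemb : Fintype.card (Fin r ↪ A) = r.factorial := by
    rw [Fintype.card_embedding_eq, hAc, Fintype.card_fin, Nat.descFactorial_self]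
  rw [← hemb, ← card_univ]
  refine card_le_card_of_surjOn (fun (e : Fin r ↪ A) i => (e i : V)) ?_
  intro g hg
  obtain ⟨hg', rfl⟩ := mem_filter.1 hg
  exact ⟨⟨fun i => ⟨g i, by simp⟩, fun i j h =>
    goodTuples_injective h2 π hr hg' (congrArg Subtype.val h)⟩, by simp, rfl⟩

lemma exists_graph [Fintype Z] (h2 : ∀ z : Z, z + z = 0) (π : V →+ Z) (hπ : Function.Surjective π)
    (r : ℕ) (hr : 4 < r) : ∃ H : Finset (Finset V), (∀ A ∈ H, A.card = r) ∧
      FrFree H (r + 1) 2 ∧ FrFree H (r + 2) 3 ∧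
      Fintype.card V ^ (r - 1) * Fintype.card Z ≤
        r.factorial * H.card * Fintype.card Z + 2 ^ r * Fintype.card V ^ (r - 1) := by
  refine ⟨edges π r, fun A hA => (mem_edges.1 hA).1, edges_free_two π r,
    edges_free_three h2 π r hr, ?_⟩
  have h := card_goodTuples π hπ r (by omega)
  have h' := card_goodTuples_le h2 π hr
  have hn : 0 < Fintype.card V := Fintype.card_pos_iff.2 ⟨0⟩
  obtain ⟨k, rfl⟩ : ∃ k, r = k + 1 := ⟨r - 1, by omega⟩
  rw [Nat.add_sub_cancel]
  refine Nat.le_of_mul_le_mul_left ?_ hn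
  calc _ = Fintype.card V ^ (k + 1) * Fintype.card Z := by ring
    _ ≤ _ := h
    _ ≤ _ := Nat.add_le_add_right (Nat.mul_le_mul_right _ h') _
    _ = _ := by ring

end Construction

/-! ### The graph on `m * 2 ^ d` vertices -/

/-- `exists_graph` on a bare vertex set, with the group structure pulled back along a bijection. -/
lemma exists_graph_of_equiv {V Z Y : Type*} [Fintype V] [DecidableEq V] [AddCommGroup Z]
    [Fintype Z] [DecidableEq Z] [AddCommGroup Y] (e : V ≃ Z × Y) (h2 : ∀ z : Z, z + z = 0)
    (r : ℕ) (hr : 4 < r) : ∃ H : Finset (Finset V), (∀ A ∈ H, A.card = r) ∧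
      FrFree H (r + 1) 2 ∧ FrFree H (r + 2) 3 ∧
      Fintype.card V ^ (r - 1) * Fintype.card Z ≤
        r.factorial * H.card * Fintype.card Z + 2 ^ r * Fintype.card V ^ (r - 1) := by
  let _ : AddCommGroup V := e.addCommGroup
  let π : V →+ Z :=
    { toFun := fun x => (e x).1
      map_zero' := by
        have : e 0 = 0 := e.apply_symm_apply 0
        rw [this]; rfl
      map_add' := fun x y => by
        have : e (x + y) = e x + e y := e.apply_symm_apply _
        rw [this]; rfl }
  have hπ : Function.Surjective π := fun z => ⟨e.symm (z, 0), by
    change (e (e.symm (z, 0))).1 = z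
    rw [e.apply_symm_apply]⟩
  exact exists_graph h2 π hπ r hr

/-- For every integer `r > 4` there exists a constant `C > 0` such that for all positive
integers `m` and `d`, setting `n = m·2^d`, there exists an `r`-graph on `n` vertices
which is `F_r(r+1,2)`-free and `F_r(r+2,3)`-free and has at least
`(1/r − C/2^d)·C(n,r−1)` edges. -/
theorem stmt_12 (r : ℕ) (hr : 4 < r) :
    ∃ C : ℝ, 0 < C ∧ ∀ m d : ℕ, 0 < m → 0 < d →
      ∃ H : Finset (Finset (Fin (m * 2 ^ d))),
        (∀ A ∈ H, A.card = r) ∧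
        FrFree H (r + 1) 2 ∧ FrFree H (r + 2) 3 ∧
        ((1 / r : ℝ) - C / 2 ^ d) * ((m * 2 ^ d).choose (r - 1)) ≤ H.card := by
  have hr0 : (0 : ℝ) < r := by exact_mod_cast (by omega : 0 < r)
  refine ⟨2 ^ r / r, by positivity, fun m d hm _ => ?_⟩
  have : NeZero m := ⟨hm.ne'⟩
  let e : Fin (m * 2 ^ d) ≃ (Fin d → ZMod 2) × ZMod m :=
    Fintype.equivOfCardEq (by simp [ZMod.card, mul_comm])
  obtain ⟨H, h1, h2, h3, h4⟩ :=
    exists_graph_of_equiv e (fun z => funext fun i => CharTwo.add_self_eq_zero _) r hr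
  refine ⟨H, h1, h2, h3, ?_⟩
  simp only [Fintype.card_fin, Fintype.card_fun, ZMod.card] at h4
  clear_value e
  clear e
  generalize m * 2 ^ d = n at *
  obtain ⟨k, rfl⟩ : ∃ k, r = k + 1 := ⟨r - 1, by omega⟩
  rw [Nat.add_sub_cancel] at *
  have hch : (n.choose k : ℝ) * k.factorial ≤ (n : ℝ) ^ k := by
    have := Nat.descFactorial_le_pow n k
    rw [Nat.descFactorial_eq_factorial_mul_choose, mul_comm] at this
    exact_mod_cast this
  have h4' : (n : ℝ) ^ k * 2 ^ d ≤
      (k + 1) * k.factorial * H.card * 2 ^ d + 2 ^ (k + 1) * (n : ℝ) ^ k := by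
    rw [Nat.factorial_succ] at h4
    exact_mod_cast h4
  have hq : (0 : ℝ) < 2 ^ d := by positivity
  have hf : (0 : ℝ) < k.factorial := by exact_mod_cast k.factorial_pos
  have hk : (0 : ℝ) < (k : ℝ) + 1 := by positivity
  push_cast
  have heq : (1 / ((k : ℝ) + 1) - 2 ^ (k + 1) / ((k : ℝ) + 1) / 2 ^ d) * (n.choose k : ℝ)
      = ((2 ^ d - 2 ^ (k + 1)) * (n.choose k : ℝ)) / (((k : ℝ) + 1) * 2 ^ d) := by
    field_simp
  rw [heq, div_le_iff₀ (by positivity)]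
  rcases le_total ((2 : ℝ) ^ d - 2 ^ (k + 1)) 0 with hneg | hpos
  · exact (mul_nonpos_of_nonpos_of_nonneg hneg (by positivity)).trans (by positivity)
  · refine le_of_mul_le_mul_right ?_ hf
    have := mul_le_mul_of_nonneg_left hch hpos
    nlinarith
end

section
/- For every integer r > 4 and all positive integers m ≥ 2 and d, the r-graph H_{m,d} is F_r(r+2,3)-free; that is, there do not exist three distinct edges of H_{m,d} whose union contains at most r+2 vertices. -/
/-- `H_{m,d}`: the `r`-graph on vertex set `ℤ/mℤ × (ℤ/2ℤ)^d` whose edges are the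
`r`-element subsets `{(x₁,y₁),…,(x_r,y_r)}` with `y₁,…,y_r` pairwise distinct,
`x₁+⋯+x_r ≡ 0 (mod m)`, and `{y₁,…,y_r}` an edge of `H_d`. -/
def Hmd (r m d : ℕ) [NeZero m] : Finset (Finset (ZMod m × (Fin d → ZMod 2))) :=
  Finset.univ.filter (fun A => A.card = r ∧ (A.image Prod.snd).card = r ∧
    A.sum Prod.fst = 0 ∧ A.image Prod.snd ∈ Hd r d)

/-- What the argument uses about an edge of `H_{m,d}`: the zero-sum conditions are expressed as
sums over the edge itself rather than over its projection. -/
lemma edge_properties {r m d : ℕ} [NeZero m] {A : Finset (ZMod m × (Fin d → ZMod 2))}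
    (hA : A ∈ Hmd r m d) :
    A.card = r ∧ ∑ a ∈ A, a.1 = 0 ∧ ∑ a ∈ A, a.2 = 0 ∧
      ∀ D ⊆ A, D.card = r - 4 → ∑ a ∈ D, a.2 ≠ 0 := by
  simp only [Hmd, Hd, Finset.mem_filter, Finset.mem_univ, true_and] at hA
  obtain ⟨hc, hi, hs, -, hz, hB⟩ := hA
  have inj : Set.InjOn Prod.snd (A : Set (ZMod m × (Fin d → ZMod 2))) :=
    Finset.card_image_iff.mp (hi.trans hc.symm)
  refine ⟨hc, hs, ?_, fun D hD hDc => ?_⟩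
  · rwa [Finset.sum_image inj] at hz
  · have injD := inj.mono (Finset.coe_subset.mpr hD)
    have h := hB (D.image Prod.snd) (Finset.mem_powerset.mpr (Finset.image_subset_image hD))
      (Or.inr ((Finset.card_image_of_injOn injD).trans hDc))
    rwa [Finset.sum_image injD] at h

lemma sum_sdiff_eq_of_sum_eq {V M : Type*} [DecidableEq V] [AddCommGroup M] {A B : Finset V}
    {f : V → M} (h : ∑ a ∈ A, f a = ∑ a ∈ B, f a) :
    ∑ a ∈ A \ B, f a = ∑ a ∈ B \ A, f a := by
  have hA := Finset.sum_inter_add_sum_sdiff A B f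
  have hB := Finset.sum_inter_add_sum_sdiff B A f
  rw [Finset.inter_comm] at hB
  exact add_left_cancel (hA.trans (h.trans hB.symm))

/-- The vertex exchanged between two edges differing in one vertex is determined by the zero-sum
conditions, so distinct edges differ in at least two vertices. -/
lemma card_sdiff_eq_two {r m d : ℕ} [NeZero m] {A B : Finset (ZMod m × (Fin d → ZMod 2))}
    (hA : A ∈ Hmd r m d) (hB : B ∈ Hmd r m d) (hne : A ≠ B) (hU : (A ∪ B).card ≤ r + 2) :
    (A \ B).card = 2 := by
  obtain ⟨hAc, hA1, hA2, -⟩ := edge_properties hA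
  obtain ⟨hBc, hB1, hB2, -⟩ := edge_properties hB
  have h1 := Finset.card_sdiff_add_card A B
  have h2 : (B \ A).card = (A \ B).card := Finset.card_sdiff_comm (hBc.trans hAc.symm)
  have h0 : (A \ B).card ≠ 0 := fun h => hne <|
    Finset.eq_of_subset_of_card_le
      (Finset.sdiff_eq_empty_iff_subset.mp (Finset.card_eq_zero.mp h)) (hBc.trans hAc.symm).le
  have hone : (A \ B).card ≠ 1 := fun h => by
    obtain ⟨a, ha⟩ := Finset.card_eq_one.mp h
    obtain ⟨b, hb⟩ := Finset.card_eq_one.mp (h2.trans h)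
    have e1 := sum_sdiff_eq_of_sum_eq (hA1.trans hB1.symm)
    have e2 := sum_sdiff_eq_of_sum_eq (hA2.trans hB2.symm)
    rw [ha, hb, Finset.sum_singleton, Finset.sum_singleton] at e1 e2
    have hab : a = b := Prod.ext e1 e2
    have ha' : a ∈ A \ B := by simp [ha]
    have hb' : b ∈ B \ A := by simp [hb]
    rw [Finset.mem_sdiff] at ha' hb'
    exact hb'.2 (hab ▸ ha'.1)
  omega

/-- For every integer `r > 4` and all positive integers `m ≥ 2` and `d`, the `r`-graph
`H_{m,d}` is `F_r(r+2,3)`-free: there do not exist three distinct edges of `H_{m,d}`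
whose union contains at most `r+2` vertices. -/
theorem stmt_13 (r m d : ℕ) [NeZero m] (hr : 4 < r) (hm : 2 ≤ m) (hd : 0 < d) :
    FrFree (Hmd r m d) (r + 2) 3 := by
  rintro ⟨S, hS, hS3, hU⟩
  obtain ⟨A, B, C, hAB, hAC, hBC, rfl⟩ := Finset.card_eq_three.mp hS3
  have hA : A ∈ Hmd r m d := hS (by simp)
  have hB : B ∈ Hmd r m d := hS (by simp)
  have hC : C ∈ Hmd r m d := hS (by simp)
  have hbi : ({A, B, C} : Finset (Finset (ZMod m × (Fin d → ZMod 2)))).biUnion id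
      = A ∪ (B ∪ C) := by
    simp [Finset.biUnion_insert]
  rw [hbi] at hU
  have bound : ∀ X ⊆ A ∪ (B ∪ C), X.card ≤ r + 2 := fun X hX => (Finset.card_le_card hX).trans hU
  have cAB := card_sdiff_eq_two hA hB hAB (bound _ (by grind))
  have cBA := card_sdiff_eq_two hB hA hAB.symm (bound _ (by grind))
  have cCA := card_sdiff_eq_two hC hA hAC.symm (bound _ (by grind))
  have cCB := card_sdiff_eq_two hC hB hBC.symm (bound _ (by grind))
  obtain ⟨hAc, -, hA2, hAD⟩ := edge_properties hA
  obtain ⟨hBc, -, hB2, -⟩ := edge_properties hB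
  obtain ⟨hCc, -, hC2, -⟩ := edge_properties hC
  have hUAB : A ∪ B = A ∪ (B ∪ C) := by
    refine Finset.eq_of_subset_of_card_le (by grind) ?_
    have := Finset.card_sdiff_add_card A B
    omega
  have hCsub : C ⊆ A ∪ B := hUAB ▸ (by grind)
  have eCA : C \ A = B \ A :=
    Finset.eq_of_subset_of_card_le (by grind) (by omega)
  have eCB : C \ B = A \ B :=
    Finset.eq_of_subset_of_card_le (by grind) (by omega)
  -- `C` splits as `B \ A`, `A \ B` and the common part of the three edges.
  have eD : (C ∩ A) \ B = A \ B := by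
    ext x
    have h := Finset.ext_iff.mp eCB x
    simp only [Finset.mem_sdiff, Finset.mem_inter] at h ⊢
    tauto
  have hDc : ((C ∩ A) ∩ B).card = r - 4 := by
    have h1 := Finset.card_inter_add_card_sdiff C A
    have h2 := Finset.card_inter_add_card_sdiff (C ∩ A) B
    rw [eD] at h2
    omega
  refine hAD ((C ∩ A) ∩ B) (by grind) hDc ?_
  have h1 := Finset.sum_inter_add_sum_sdiff C A Prod.snd
  have h2 := Finset.sum_inter_add_sum_sdiff (C ∩ A) B Prod.snd
  have h3 := sum_sdiff_eq_of_sum_eq (hA2.trans hB2.symm)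
  rw [eD] at h2
  rw [← h2, eCA, ← h3, hC2, add_assoc] at h1
  -- Twice the common sum of `A \ B` and `B \ A` vanishes in characteristic two.
  have h4 : ∀ v : Fin d → ZMod 2, v + v = 0 := fun v => by
    funext i
    exact CharTwo.add_self_eq_zero (v i)
  rwa [h4, add_zero] at h1
end

section
/- For every integer r ≥ 3 and every real ε > 0 there exists N such that for every integer n ≥ N: (i) there exists an r-graph on n vertices which is F_r(r+1,2)-free and F_r(r+2,3)-free with at least (1/r − ε)·C(n,r−1) edges, and (ii) every r-graph on n vertices which is F_r(r+1,2)-free and F_r(r+2,3)-free has at most (1/r)·C(n,r−1) edges. In other words, ex(n, F_r(r+1,2) ∪ F_r(r+2,3)) = (1/r − o(1))·C(n,r−1) as n → ∞. -/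
theorem frFree_two_iff {V : Type*} [DecidableEq V] {H : Finset (Finset V)} {v : ℕ} :
    FrFree H v 2 ↔ ∀ A ∈ H, ∀ B ∈ H, A ≠ B → v < (A ∪ B).card := by
  constructor
  · intro h A hA B hB hAB
    by_contra! hc
    exact h ⟨{A, B}, by simp [Finset.insert_subset_iff, hA, hB], Finset.card_pair hAB,
      by simpa [Finset.biUnion_insert] using hc⟩
  · rintro h ⟨S, hS, hc, hU⟩
    obtain ⟨A, B, hAB, rfl⟩ := Finset.card_eq_two.1 hc
    have := h A (hS (by simp)) B (hS (by simp)) hAB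
    simp [Finset.biUnion_insert] at hU
    omega

theorem frFree_two_of_sum_eq {V G : Type*} [DecidableEq V] [AddCommGroup G] {r : ℕ}
    {H : Finset (Finset V)} (hH : ∀ A ∈ H, A.card = r) (f : V → G) (hf : Function.Injective f)
    (s : G) (hs : ∀ A ∈ H, ∑ x ∈ A, f x = s) : FrFree H (r + 1) 2 := by
  rw [frFree_two_iff]
  intro A hA B hB hAB
  by_contra! hc
  have key : ∀ A B : Finset V, A.card = r → B.card = r → A ≠ B → (A ∪ B).card ≤ r + 1 →
      ∃ a, A \ B = {a} := by
    intro A B hA hB hAB hc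
    rw [← Finset.card_eq_one]
    have h1 := Finset.card_sdiff_add_card A B
    have h2 : (A \ B).card ≠ 0 := by
      intro h0
      rw [Finset.card_eq_zero, Finset.sdiff_eq_empty_iff_subset] at h0
      exact hAB (Finset.eq_of_subset_of_card_le h0 (by omega))
    omega
  obtain ⟨a, ha⟩ := key A B (hH A hA) (hH B hB) hAB hc
  obtain ⟨b, hb⟩ := key B A (hH B hB) (hH A hA) hAB.symm (by rwa [Finset.union_comm])
  have h1 := Finset.sum_inter_add_sum_sdiff A B f
  have h2 := Finset.sum_inter_add_sum_sdiff B A f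
  rw [ha, Finset.sum_singleton, hs A hA] at h1
  rw [hb, Finset.sum_singleton, hs B hB, Finset.inter_comm] at h2
  have hab : a = b := hf (add_left_cancel (h1.trans h2.symm))
  have ha' : a ∈ A \ B := by simp [ha]
  have hb' : b ∈ B \ A := by simp [hb]
  rw [Finset.mem_sdiff] at ha' hb'
  exact hb'.2 (hab ▸ ha'.1)

theorem frFree_three_of_sum_eq {V K : Type*} [DecidableEq V] [AddCommGroup K]
    (hK : ∀ x : K, x + x = 0) {r : ℕ}
    {H : Finset (Finset V)} (hH : ∀ A ∈ H, A.card = r) (h2 : FrFree H (r + 1) 2) (p : V → K)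
    (s : K) (hs : ∀ A ∈ H, ∑ x ∈ A, p x = s)
    (hgood : ∀ A ∈ H, ∀ X ⊆ A, X.card = 4 → ∑ x ∈ X, p x ≠ 0) : FrFree H (r + 2) 3 := by
  rw [frFree_two_iff] at h2
  rintro ⟨S, hS, hc, hU⟩
  obtain ⟨A, B, C, hAB, hAC, hBC, rfl⟩ := Finset.card_eq_three.1 hc
  have hA : A ∈ H := hS (by simp)
  have hB : B ∈ H := hS (by simp)
  have hC : C ∈ H := hS (by simp)
  set U := ({A, B, C} : Finset (Finset V)).biUnion id with hUdef
  have hsub : ∀ D ∈ ({A, B, C} : Finset (Finset V)), D ⊆ U :=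
    fun D hD => Finset.subset_biUnion_of_mem id hD
  have hAU : A ⊆ U := hsub A (by simp)
  have hBU : B ⊆ U := hsub B (by simp)
  have hCU : C ⊆ U := hsub C (by simp)
  -- Any two edges already cover `U`.
  have cover : ∀ D ∈ H, ∀ E ∈ H, D ≠ E → D ⊆ U → E ⊆ U → D ∪ E = U := by
    intro D hD E hE hDE hDU hEU
    have := h2 D hD E hE hDE
    exact Finset.eq_of_subset_of_card_le (Finset.union_subset hDU hEU) (by omega)
  have cAB := cover A hA B hB hAB hAU hBU
  have cAC := cover A hA C hC hAC hAU hCU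
  have cBC := cover B hB C hC hBC hBU hCU
  have hUc : U.card = r + 2 := by
    have := h2 A hA B hB hAB
    rw [cAB] at this
    omega
  have hdisj : Disjoint (U \ B) (U \ C) := by
    rw [Finset.disjoint_left]
    intro x hx hx'
    rw [Finset.mem_sdiff] at hx hx'
    have := hx.1
    rw [← cBC, Finset.mem_union] at this
    tauto
  have hX : U \ B ∪ U \ C ⊆ A := by
    intro x hx
    rw [Finset.mem_union, Finset.mem_sdiff, Finset.mem_sdiff] at hx
    rcases hx with ⟨hx, hn⟩ | ⟨hx, hn⟩
    · rw [← cAB, Finset.mem_union] at hx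
      tauto
    · rw [← cAC, Finset.mem_union] at hx
      tauto
  refine hgood A hA _ hX ?_ ?_
  · rw [Finset.card_union_of_disjoint hdisj, Finset.card_sdiff_of_subset hBU,
      Finset.card_sdiff_of_subset hCU, hUc, hH B hB, hH C hC]
    omega
  · have e1 := Finset.sum_sdiff hBU (f := p)
    have e2 := Finset.sum_sdiff hCU (f := p)
    rw [hs B hB] at e1
    rw [hs C hC] at e2
    rw [Finset.sum_union hdisj, add_right_cancel (e1.trans e2.symm)]
    exact hK _

/-- The `r`-sets having a `4`-subset with `p`-sum zero. -/
def badSets {V K : Type*} [Fintype V] [DecidableEq V] [AddCommGroup K] [DecidableEq K]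
    (p : V → K) (r : ℕ) : Finset (Finset V) :=
  (Finset.univ.powersetCard r).filter fun A => ∃ X ⊆ A, X.card = 4 ∧ ∑ x ∈ X, p x = 0

/-- Three elements of a zero-sum `4`-set determine the value of `p` at the fourth. -/
theorem card_zeroSum_four_le {V K : Type*} [Fintype V] [DecidableEq V] [DecidableEq K]
    [AddCommGroup K] (p : V → K) (m : ℕ)
    (hm : ∀ c, (Finset.univ.filter fun x => p x = c).card ≤ m) :
    ((Finset.univ.powersetCard 4).filter fun X : Finset V => ∑ x ∈ X, p x = 0).card ≤
      Fintype.card V ^ 3 * m := by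
  have hsub : ((Finset.univ.powersetCard 4).filter fun X : Finset V => ∑ x ∈ X, p x = 0) ⊆
      (Finset.univ : Finset (V × V × V)).biUnion fun t =>
        (Finset.univ.filter fun x => p x = -(p t.1 + p t.2.1 + p t.2.2)).image
          fun x => {t.1, t.2.1, t.2.2, x} := by
    intro X hX
    rw [Finset.mem_filter, Finset.mem_powersetCard] at hX
    obtain ⟨⟨-, hc⟩, h0⟩ := hX
    obtain ⟨a, b, c, d, hab, hac, had, hbc, hbd, hcd, rfl⟩ := Finset.card_eq_four.1 hc
    simp only [Finset.mem_biUnion, Finset.mem_image, Finset.mem_filter, Finset.mem_univ, true_and]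
    refine ⟨(a, b, c), d, ?_, rfl⟩
    rw [Finset.sum_insert (by simp [*]), Finset.sum_insert (by simp [*]),
      Finset.sum_insert (by simp [*]), Finset.sum_singleton] at h0
    rw [eq_neg_iff_add_eq_zero, ← h0]
    abel
  refine (Finset.card_le_card hsub).trans ?_
  refine (Finset.card_biUnion_le_card_mul _ _ m fun t _ =>
    Finset.card_image_le.trans (hm _)).trans (le_of_eq ?_)
  rw [Finset.card_univ, Fintype.card_prod, Fintype.card_prod]
  ring

theorem card_bad_le {V K : Type*} [Fintype V] [DecidableEq V]
    [AddCommGroup K] [DecidableEq K] (p : V → K) (m r : ℕ)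
    (hm : ∀ c, (Finset.univ.filter fun x => p x = c).card ≤ m) :
    (badSets p r).card ≤ Fintype.card V ^ (r - 1) * m := by
  by_cases hr : r < 4
  · have : badSets p r = ∅ := by
      unfold badSets
      rw [Finset.filter_eq_empty_iff]
      rintro A hA ⟨X, hXA, hX, -⟩
      have := Finset.card_le_card hXA
      rw [Finset.mem_powersetCard] at hA
      omega
    simp [this]
  push Not at hr
  have hsub : badSets p r ⊆
      (((Finset.univ.powersetCard 4).filter fun X : Finset V => ∑ x ∈ X, p x = 0) ×ˢ
        (Finset.univ.powersetCard (r - 4))).image fun t => t.1 ∪ t.2 := by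
    intro A hA
    unfold badSets at hA
    rw [Finset.mem_filter, Finset.mem_powersetCard] at hA
    obtain ⟨⟨-, hA⟩, X, hXA, hX, h0⟩ := hA
    rw [Finset.mem_image]
    refine ⟨(X, A \ X), ?_, Finset.union_sdiff_of_subset hXA⟩
    simp [hX, h0, Finset.card_sdiff_of_subset hXA, hA]
  calc (badSets p r).card ≤ _ := Finset.card_le_card hsub
    _ ≤ _ := Finset.card_image_le
    _ ≤ (Fintype.card V ^ 3 * m) * Fintype.card V ^ (r - 4) := by
        rw [Finset.card_product]
        refine Nat.mul_le_mul (card_zeroSum_four_le p m hm) ?_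
        rw [Finset.card_powersetCard, Finset.card_univ]
        exact Nat.choose_le_pow _ _
    _ = Fintype.card V ^ (r - 1) * m := by
        rw [mul_right_comm, ← pow_add]
        congr 2
        omega

/-- The good `r`-sets with the most popular label sum; the last inequality is the pigeonhole bound
over the `2 ^ k * m` labels, where `m = n / 2 ^ k + 1`. -/
theorem exists_construction (r n k : ℕ) :
    ∃ H : Finset (Finset (Fin n)), (∀ A ∈ H, A.card = r) ∧
      FrFree H (r + 1) 2 ∧ FrFree H (r + 2) 3 ∧
      (n.choose r : ℝ) - (n : ℝ) ^ (r - 1) * ((n / 2 ^ k + 1 : ℕ) : ℝ) ≤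
        H.card * (2 ^ k * ((n / 2 ^ k + 1 : ℕ) : ℝ)) := by
  classical
  set m := n / 2 ^ k + 1 with hm
  have : NeZero m := ⟨Nat.succ_ne_zero _⟩
  let G := (Fin k → ZMod 2) × ZMod m
  have hG : Fintype.card G = 2 ^ k * m := by simp [G, ZMod.card]
  have hle : Fintype.card (Fin n) ≤ Fintype.card G := by
    rw [hG, Fintype.card_fin]
    have := Nat.lt_mul_div_succ n (show 0 < 2 ^ k by positivity)
    exact this.le
  obtain ⟨f⟩ := Function.Embedding.nonempty_of_card_le hle
  let p : Fin n → (Fin k → ZMod 2) := fun x => (f x).1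
  have hfib : ∀ c, (Finset.univ.filter fun x => p x = c).card ≤ m := by
    intro c
    have : (Finset.univ.filter fun x => p x = c).card ≤ (Finset.univ : Finset (ZMod m)).card := by
      refine Finset.card_le_card_of_injOn (fun x => (f x).2) (fun _ _ => by simp) ?_
      intro x hx y hy hxy
      simp only [Finset.coe_filter, Finset.mem_univ, true_and, Set.mem_ofPred_eq, p] at hx hy
      exact f.injective (Prod.ext (hx.trans hy.symm) hxy)
    simpa [ZMod.card] using this
  have hbad := card_bad_le p m r hfib
  rw [Fintype.card_fin] at hbad
  set good := Finset.univ.powersetCard r \ badSets p r with hgood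
  have hgc : (n.choose r : ℝ) - (n : ℝ) ^ (r - 1) * (m : ℝ) ≤ good.card := by
    have h1 := Finset.le_card_sdiff (badSets p r)
      (Finset.univ.powersetCard r : Finset (Finset (Fin n)))
    rw [Finset.card_powersetCard, Finset.card_univ, Fintype.card_fin, ← hgood] at h1
    have h2 : n.choose r ≤ good.card + n ^ (r - 1) * m := by omega
    have h3 : (n.choose r : ℝ) ≤ good.card + (n : ℝ) ^ (r - 1) * m := by exact_mod_cast h2
    linarith
  have hNpos : (0 : ℝ) < 2 ^ k * m := by
    have : (0 : ℝ) < m := by rw [hm]; positivity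
    positivity
  obtain ⟨s, -, hs⟩ := Finset.exists_le_card_fiber_of_nsmul_le_card_of_maps_to
    (s := good) (t := (Finset.univ : Finset G)) (f := fun A => ∑ x ∈ A, f x)
    (b := (good.card : ℝ) / (2 ^ k * m)) (fun _ _ => Finset.mem_univ _)
    ⟨0, Finset.mem_univ _⟩ (by
      rw [Finset.card_univ, hG, nsmul_eq_mul]
      push_cast
      rw [mul_div_cancel₀ _ hNpos.ne'])
  set H := good.filter fun A => ∑ x ∈ A, f x = s with hH
  have hmem : ∀ A ∈ H, A.card = r ∧ A ∉ badSets p r ∧ ∑ x ∈ A, f x = s := by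
    intro A hA
    rw [hH, Finset.mem_filter, hgood, Finset.mem_sdiff, Finset.mem_powersetCard] at hA
    exact ⟨hA.1.1.2, hA.1.2, hA.2⟩
  have hcard : ∀ A ∈ H, A.card = r := fun A hA => (hmem A hA).1
  have h2 : FrFree H (r + 1) 2 :=
    frFree_two_of_sum_eq hcard f f.injective s fun A hA => (hmem A hA).2.2
  refine ⟨H, hcard, h2, ?_, ?_⟩
  · refine frFree_three_of_sum_eq (fun x => ?_) hcard h2 p s.1 (fun A hA => ?_) ?_
    · funext i
      exact CharTwo.add_self_eq_zero (x i)
    · rw [← (hmem A hA).2.2, Prod.fst_sum]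
    · intro A hA X hXA hX h0
      refine (hmem A hA).2.1 ?_
      unfold badSets
      rw [Finset.mem_filter, Finset.mem_powersetCard]
      exact ⟨⟨Finset.subset_univ _, hcard A hA⟩, X, hXA, hX, h0⟩
  · rw [div_le_iff₀ hNpos] at hs
    exact hgc.trans hs

theorem card_mul_le_choose {r n : ℕ} (hr : 0 < r) {H : Finset (Finset (Fin n))}
    (hH : ∀ A ∈ H, A.card = r) (h2 : FrFree H (r + 1) 2) :
    H.card * r ≤ n.choose (r - 1) := by
  rw [frFree_two_iff] at h2
  have hdisj : ∀ A ∈ H, ∀ B ∈ H, A ≠ B →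
      Disjoint (A.powersetCard (r - 1)) (B.powersetCard (r - 1)) := by
    intro A hA B hB hAB
    rw [Finset.disjoint_left]
    intro T hTA hTB
    rw [Finset.mem_powersetCard] at hTA hTB
    have h3 := Finset.card_le_card (Finset.subset_inter hTA.1 hTB.1)
    have h4 := Finset.card_union_add_card_inter A B
    have h5 := h2 A hA B hB hAB
    rw [hH A hA, hH B hB] at h4
    omega
  have hc := Finset.card_biUnion hdisj
  rw [Finset.sum_congr rfl (g := fun _ => r), Finset.sum_const, smul_eq_mul] at hc
  · rw [← hc]
    calc _ ≤ ((Finset.univ : Finset (Fin n)).powersetCard (r - 1)).card := by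
          refine Finset.card_le_card (Finset.biUnion_subset.2 fun A _ => ?_)
          exact Finset.powersetCard_mono (Finset.subset_univ _)
      _ = _ := by simp
  · intro A hA
    obtain ⟨q, rfl⟩ : ∃ q, r = q + 1 := ⟨r - 1, by omega⟩
    rw [Finset.card_powersetCard, hH A hA, Nat.add_sub_cancel, Nat.choose_succ_self_right]

/-- For fixed `q` the binomial coefficient has order `n ^ q`, with an explicit constant. -/
theorem pow_le_mul_choose (q n : ℕ) (hn : 2 * q ≤ n) :
    (n : ℝ) ^ q ≤ 2 ^ q * (q.factorial : ℝ) * n.choose q := by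
  have h := Nat.pow_le_choose (α := ℝ) q n
  rw [div_le_iff₀ (by positivity)] at h
  have h1 : (n : ℝ) ≤ 2 * ((n + 1 - q : ℕ) : ℝ) := by
    have : n ≤ 2 * (n + 1 - q) := by omega
    exact_mod_cast this
  calc (n : ℝ) ^ q ≤ (2 * ((n + 1 - q : ℕ) : ℝ)) ^ q := by gcongr
    _ = 2 ^ q * ((n + 1 - q : ℕ) : ℝ) ^ q := mul_pow _ _ _
    _ ≤ 2 ^ q * (n.choose q * q.factorial) := by gcongr
    _ = _ := by ring

/-- For every integer `r ≥ 3` and every real `ε > 0` there exists `N` such that for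
every integer `n ≥ N`: (i) there exists an `r`-graph on `n` vertices which is
`F_r(r+1,2)`-free and `F_r(r+2,3)`-free with at least `(1/r − ε)·C(n,r−1)` edges, and
(ii) every `r`-graph on `n` vertices which is `F_r(r+1,2)`-free and `F_r(r+2,3)`-free
has at most `(1/r)·C(n,r−1)` edges.  In other words,
`ex(n, F_r(r+1,2) ∪ F_r(r+2,3)) = (1/r − o(1))·C(n,r−1)` as `n → ∞`. -/
theorem stmt_18 (r : ℕ) (hr : 3 ≤ r) (ε : ℝ) (hε : 0 < ε) :
    ∃ N : ℕ, ∀ n : ℕ, N ≤ n →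
      (∃ H : Finset (Finset (Fin n)),
        (∀ A ∈ H, A.card = r) ∧
        FrFree H (r + 1) 2 ∧ FrFree H (r + 2) 3 ∧
        ((1 / r : ℝ) - ε) * (n.choose (r - 1)) ≤ H.card) ∧
      (∀ H : Finset (Finset (Fin n)),
        (∀ A ∈ H, A.card = r) →
        FrFree H (r + 1) 2 → FrFree H (r + 2) 3 →
        (H.card : ℝ) ≤ (1 / r : ℝ) * (n.choose (r - 1))) := by
  have hr0 : (0 : ℝ) < r := by
    have : 0 < r := by omega
    exact_mod_cast this
  set D : ℝ := 2 ^ (r - 1) * ((r - 1).factorial : ℝ) with hD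
  have hDpos : 0 < D := by positivity
  -- With `2 ^ k ≥ 2 * D / ε` the non-good sets cost at most half of the allowed loss `ε`.
  obtain ⟨k, hk⟩ := pow_unbounded_of_one_lt (2 * D / ε) (one_lt_two)
  set K : ℝ := 2 ^ k with hKdef
  have hKpos : 0 < K := by positivity
  obtain ⟨N, hN⟩ := exists_nat_ge (2 * (1 + D + K) / ε)
  refine ⟨max N (2 * r), fun n hn => ⟨?_, ?_⟩⟩
  · have hnN : N ≤ n := (le_max_left _ _).trans hn
    have hnr : 2 * r ≤ n := (le_max_right _ _).trans hn
    obtain ⟨H, hH, h2, h3, hc⟩ := exists_construction r n k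
    refine ⟨H, hH, h2, h3, ?_⟩
    have hpow := pow_le_mul_choose (r - 1) n (by omega)
    rw [← hD] at hpow
    set C : ℝ := (n.choose (r - 1) : ℝ) with hC
    have hC0 : 0 ≤ C := by positivity
    have hchoose : (n.choose r : ℝ) * r = C * (n - r + 1) := by
      have h := Nat.choose_succ_right_eq n (r - 1)
      rw [show r - 1 + 1 = r by omega] at h
      have h' : (n.choose r : ℝ) * r = C * ((n - (r - 1) : ℕ) : ℝ) := by
        rw [hC]; exact_mod_cast h
      rw [h', Nat.cast_sub (by omega), Nat.cast_sub (by omega)]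
      push_cast
      ring
    set m : ℝ := ((n / 2 ^ k + 1 : ℕ) : ℝ) with hm
    have hm0 : 0 < m := by rw [hm]; positivity
    have hmK : m ≤ n / K + 1 := by
      rw [hm, hKdef]
      push_cast
      have := @Nat.cast_div_le ℝ _ _ _ n (2 ^ k)
      push_cast at this
      linarith
    have hKm : K * m ≤ n + K := by
      have := mul_le_mul_of_nonneg_left hmK hKpos.le
      rwa [mul_add, mul_one, mul_div_cancel₀ _ hKpos.ne'] at this
    by_cases hneg : (1 / r : ℝ) - ε ≤ 0
    · exact (mul_nonpos_of_nonpos_of_nonneg hneg hC0).trans (by positivity)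
    push Not at hneg
    have hnε : 1 + D + K ≤ n * (ε / 2) := by
      have h : 2 * (1 + D + K) / ε ≤ n := hN.trans (by exact_mod_cast hnN)
      rw [div_le_iff₀ hε] at h
      linarith
    have hDK : D * m ≤ n * (ε / 2) + D := by
      have h : D / K ≤ ε / 2 := by
        rw [div_lt_iff₀ hε] at hk
        rw [div_le_iff₀ hKpos]
        linarith
      calc D * m ≤ D * (n / K + 1) := by gcongr
        _ = n * (D / K) + D := by ring
        _ ≤ n * (ε / 2) + D := by gcongr
    have hr1 : (1 / r : ℝ) ≤ 1 := by
      rw [div_le_one hr0]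
      exact_mod_cast (by omega : 1 ≤ r)
    have hfinal : ((1 / r : ℝ) - ε) * (n + K) ≤ (1 / r) * (n - r + 1) - D * m := by
      have e1 : (1 / r : ℝ) * (n - r + 1) = (1 / r) * n - 1 + 1 / r := by
        field_simp
      have e2 : (1 / r : ℝ) * K ≤ K := mul_le_of_le_one_left hKpos.le hr1
      have e3 : 0 ≤ ε * K := by positivity
      have e4 : (0 : ℝ) < 1 / r := by positivity
      rw [e1]
      linarith
    have hKm0 : 0 < K * m := by positivity
    refine le_of_mul_le_mul_right ?_ hKm0
    calc ((1 / r : ℝ) - ε) * C * (K * m) ≤ ((1 / r : ℝ) - ε) * C * (n + K) := by gcongr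
      _ = C * (((1 / r : ℝ) - ε) * (n + K)) := by ring
      _ ≤ C * ((1 / r) * (n - r + 1) - D * m) := by gcongr
      _ = (1 / r) * (C * (n - r + 1)) - D * C * m := by ring
      _ = n.choose r - D * C * m := by
          rw [← hchoose]
          field_simp
      _ ≤ n.choose r - (n : ℝ) ^ (r - 1) * m := by gcongr
      _ ≤ H.card * (K * m) := hc
  · intro H hH h2 _
    have h := card_mul_le_choose (by omega) hH h2
    have h' : (H.card : ℝ) * r ≤ n.choose (r - 1) := by exact_mod_cast h
    rw [one_div, inv_mul_eq_div, le_div_iff₀ hr0]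
    exact h'
end

section
/- For every integer r ≥ 3 and every real ε > 0 there exists N such that for every integer n ≥ N there exists an F_r(r+2,3)-free r-graph on n vertices with at least (1/r − ε)·C(n,r−1) edges; that is, f_r(n, r+2, 3) ≥ (1/r − o(1))·C(n,r−1) as n → ∞. -/
open Finset

/-- `r`-sets with a common sum in `B × Z`, where `B` has exponent 2, and with no 4-subset of
zero `B`-sum, form an `F_r(r+2,3)`-free family. -/
lemma frFree_of_sum_eq {V B Z : Type*} [DecidableEq V] [AddCommGroup B] [AddCommGroup Z]
    (hB : ∀ b : B, b + b = 0) (φ : V → B × Z) (hφ : Function.Injective φ) (s : B × Z) (r : ℕ)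
    (H : Finset (Finset V)) (hcard : ∀ A ∈ H, A.card = r) (hsum : ∀ A ∈ H, ∑ v ∈ A, φ v = s)
    (hbad : ∀ A ∈ H, ∀ Q ⊆ A, Q.card = 4 → ∑ v ∈ Q, (φ v).1 ≠ 0) :
    FrFree H (r + 2) 3 := by
  -- Two edges spanning at most `r + 1` vertices differ in one vertex, which the sum determines.
  have key : ∀ A ∈ H, ∀ C ∈ H, A ≠ C → r + 2 ≤ (A ∪ C).card := by
    intro A hA C hC hne
    by_contra! hlt
    have h1 := card_sdiff_add_card A C
    have h2 := card_sdiff_add_card C A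
    rw [union_comm C A] at h2
    have hcA := hcard A hA
    have hcC := hcard C hC
    have hpos : (A \ C).card ≠ 0 := by
      intro h0
      rw [card_eq_zero, sdiff_eq_empty_iff_subset] at h0
      exact hne (eq_of_subset_of_card_le h0 (by omega))
    obtain ⟨a, ha⟩ := card_eq_one.mp (show (A \ C).card = 1 by omega)
    obtain ⟨c, hc⟩ := card_eq_one.mp (show (C \ A).card = 1 by omega)
    have e1 := sum_inter_add_sum_sdiff A C φ
    have e2 := sum_inter_add_sum_sdiff C A φ
    rw [inter_comm C A] at e2
    rw [ha, sum_singleton, hsum A hA] at e1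
    rw [hc, sum_singleton, hsum C hC] at e2
    have hac : a = c := hφ (add_left_cancel (e1.trans e2.symm))
    have ha' : a ∈ A \ C := by simp [ha]
    have hc' : c ∈ C \ A := by simp [hc]
    rw [mem_sdiff] at ha' hc'
    exact ha'.2 (hac ▸ hc'.1)
  rintro ⟨S, hS, hS3, hU⟩
  obtain ⟨A, C, D, hAC, hAD, hCD, rfl⟩ := card_eq_three.mp hS3
  have hA : A ∈ H := hS (by simp)
  have hC : C ∈ H := hS (by simp)
  have hD : D ∈ H := hS (by simp)
  set U := ({A, C, D} : Finset (Finset V)).biUnion id with hUdef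
  have sA : A ⊆ U := subset_biUnion_of_mem id (by simp)
  have sC : C ⊆ U := subset_biUnion_of_mem id (by simp)
  have sD : D ⊆ U := subset_biUnion_of_mem id (by simp)
  have uAC : A ∪ C = U := eq_of_subset_of_card_le (union_subset sA sC)
    (hU.trans (key A hA C hC hAC))
  have uAD : A ∪ D = U := eq_of_subset_of_card_le (union_subset sA sD)
    (hU.trans (key A hA D hD hAD))
  have uCD : C ∪ D = U := eq_of_subset_of_card_le (union_subset sC sD)
    (hU.trans (key C hC D hD hCD))
  have hUc : U.card = r + 2 := le_antisymm hU (by rw [← uAC]; exact key A hA C hC hAC)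
  have hdisj : Disjoint (U \ C) (U \ D) := by
    rw [Finset.disjoint_left]
    intro x hx hx'
    rw [mem_sdiff] at hx hx'
    have := hx.1
    rw [← uCD, mem_union] at this
    tauto
  have hQA : (U \ C) ∪ (U \ D) ⊆ A := by
    intro x hx
    rw [mem_union, mem_sdiff, mem_sdiff] at hx
    rcases hx with ⟨hx, hx'⟩ | ⟨hx, hx'⟩
    · rw [← uAC, mem_union] at hx; tauto
    · rw [← uAD, mem_union] at hx; tauto
  have hQ4 : ((U \ C) ∪ (U \ D)).card = 4 := by
    rw [card_union_of_disjoint hdisj, card_sdiff_of_subset sC, card_sdiff_of_subset sD,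
      hcard C hC, hcard D hD, hUc]
    omega
  apply hbad A hA _ hQA hQ4
  have e1 := sum_sdiff (f := φ) sC
  have e2 := sum_sdiff (f := φ) sD
  rw [hsum C hC] at e1
  rw [hsum D hD] at e2
  have e3 : ∑ v ∈ U \ C, φ v = ∑ v ∈ U \ D, φ v := add_right_cancel (e1.trans e2.symm)
  rw [← Prod.fst_sum, sum_union hdisj, e3, Prod.fst_add, hB]

/-- A 4-set with zero `B`-sum is determined by three of its elements and the `Z`-coordinate of
the fourth. -/
lemma card_bad_four_le {B Z : Type*} [AddCommGroup B] [DecidableEq B] [Fintype Z] {n : ℕ}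
    (φ : Fin n → B × Z) (hφ : Function.Injective φ) :
    ((powersetCard 4 (univ : Finset (Fin n))).filter
      (fun Q => ∑ v ∈ Q, (φ v).1 = 0)).card ≤ n ^ 3 * Fintype.card Z := by
  classical
  have hsub : (powersetCard 4 (univ : Finset (Fin n))).filter (fun Q => ∑ v ∈ Q, (φ v).1 = 0) ⊆
      (powersetCard 3 (univ : Finset (Fin n))).biUnion (fun T =>
        (univ.filter (fun v => (φ v).1 = - ∑ w ∈ T, (φ w).1)).image (fun v => insert v T)) := by
    intro Q hQ
    rw [mem_filter, mem_powersetCard] at hQ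
    obtain ⟨⟨-, hQ4⟩, hQ0⟩ := hQ
    obtain ⟨v, hv⟩ : Q.Nonempty := card_pos.mp (by omega)
    rw [mem_biUnion]
    refine ⟨Q.erase v, ?_, ?_⟩
    · rw [mem_powersetCard, card_erase_of_mem hv, hQ4]
      exact ⟨subset_univ _, rfl⟩
    · rw [mem_image]
      refine ⟨v, ?_, insert_erase hv⟩
      rw [mem_filter]
      refine ⟨mem_univ _, ?_⟩
      rw [← add_sum_erase _ _ hv] at hQ0
      exact eq_neg_of_add_eq_zero_left hQ0
  refine (card_le_card hsub).trans ?_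
  refine (card_biUnion_le_card_mul _ _ (Fintype.card Z) ?_).trans ?_
  · intro T _
    refine card_image_le.trans ?_
    rw [← card_univ]
    apply card_le_card_of_injOn (fun v => (φ v).2) (fun _ _ => mem_coe.mpr (mem_univ _))
    intro v hv w hw hvw
    simp only [coe_filter, Set.mem_ofPred_eq, mem_univ, true_and] at hv hw
    exact hφ (Prod.ext (hv.trans hw.symm) hvw)
  · gcongr
    rw [card_powersetCard, card_univ, Fintype.card_fin]
    exact Nat.choose_le_pow n 3

lemma card_bad_le_s19 {B Z : Type*} [AddCommGroup B] [Fintype Z] {n : ℕ}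
    (φ : Fin n → B × Z) (hφ : Function.Injective φ) (r : ℕ) (bad : Finset (Finset (Fin n)))
    (hbad : ∀ A ∈ bad, A.card = r ∧ ∃ Q ⊆ A, Q.card = 4 ∧ ∑ v ∈ Q, (φ v).1 = 0) :
    bad.card ≤ n ^ (r - 1) * Fintype.card Z := by
  classical
  rcases bad.eq_empty_or_nonempty with rfl | ⟨A₀, hA₀⟩
  · simp
  have hr : 4 ≤ r := by
    obtain ⟨h, Q, hQ, hQ4, -⟩ := hbad A₀ hA₀
    have := card_le_card hQ
    omega
  have hsub : bad ⊆ ((powersetCard 4 (univ : Finset (Fin n))).filter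
      (fun Q => ∑ v ∈ Q, (φ v).1 = 0)).biUnion (fun Q =>
        (powersetCard (r - 4) (univ : Finset (Fin n))).image (fun R => Q ∪ R)) := by
    intro A hA
    obtain ⟨h, Q, hQ, hQ4, hQ0⟩ := hbad A hA
    rw [mem_biUnion]
    refine ⟨Q, by simp [hQ4, hQ0], ?_⟩
    rw [mem_image]
    refine ⟨A \ Q, ?_, union_sdiff_of_subset hQ⟩
    rw [mem_powersetCard, card_sdiff_of_subset hQ, h, hQ4]
    exact ⟨subset_univ _, rfl⟩
  refine (card_le_card hsub).trans ?_
  refine (card_biUnion_le_card_mul _ _ (n ^ (r - 4)) ?_).trans ?_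
  · intro Q _
    refine card_image_le.trans ?_
    rw [card_powersetCard, card_univ, Fintype.card_fin]
    exact Nat.choose_le_pow n _
  · refine (Nat.mul_le_mul_right _ (card_bad_four_le φ hφ)).trans (le_of_eq ?_)
    rw [show r - 1 = 3 + (r - 4) by omega, pow_add]
    ring

/-- The averaging step: some `s : B × Z` gives at least the average number of edges. -/
lemma exists_family {B Z : Type*} [AddCommGroup B] [AddCommGroup Z] [Fintype B] [Fintype Z]
    (hB : ∀ b : B, b + b = 0) {n : ℕ} (φ : Fin n → B × Z) (hφ : Function.Injective φ) (r : ℕ)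
    (x : ℝ) (hx : (Fintype.card (B × Z) : ℝ) * x ≤
      n.choose r - (n : ℝ) ^ (r - 1) * Fintype.card Z) :
    ∃ H : Finset (Finset (Fin n)), (∀ A ∈ H, A.card = r) ∧ FrFree H (r + 2) 3 ∧ x ≤ H.card := by
  classical
  let P : Finset (Fin n) → Prop := fun A => ∃ Q ⊆ A, Q.card = 4 ∧ ∑ v ∈ Q, (φ v).1 = 0
  let all := powersetCard r (univ : Finset (Fin n))
  let good := all.filter (fun A => ¬ P A)
  have hbad : (all.filter P).card ≤ n ^ (r - 1) * Fintype.card Z := by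
    apply card_bad_le_s19 φ hφ r
    intro A hA
    rw [mem_filter, mem_powersetCard] at hA
    exact ⟨hA.1.2, hA.2⟩
  have hsplit : (all.filter P).card + good.card = n.choose r := by
    rw [card_filter_add_card_filter_not, card_powersetCard, card_univ, Fintype.card_fin]
  have hgood : (Fintype.card (B × Z) : ℝ) * x ≤ good.card := by
    have h1 : ((all.filter P).card : ℝ) + good.card = n.choose r := by exact_mod_cast hsplit
    have h2 : ((all.filter P).card : ℝ) ≤ (n : ℝ) ^ (r - 1) * Fintype.card Z := by
      exact_mod_cast hbad
    linarith
  obtain ⟨s, -, hs⟩ := exists_le_card_fiber_of_nsmul_le_card_of_maps_to (s := good)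
    (t := (univ : Finset (B × Z))) (f := fun A => ∑ v ∈ A, φ v) (b := x)
    (fun _ _ => mem_univ _) ⟨0, mem_univ _⟩ (by rw [nsmul_eq_mul, card_univ]; exact hgood)
  have hmem : ∀ A ∈ good.filter (fun A => ∑ v ∈ A, φ v = s),
      A.card = r ∧ ¬ P A ∧ ∑ v ∈ A, φ v = s := by
    intro A hA
    rw [mem_filter, mem_filter, mem_powersetCard] at hA
    exact ⟨hA.1.1.2, hA.1.2, hA.2⟩
  refine ⟨good.filter (fun A => ∑ v ∈ A, φ v = s), fun A hA => (hmem A hA).1, ?_, hs⟩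
  refine frFree_of_sum_eq hB φ hφ s r _ (fun A hA => (hmem A hA).1) (fun A hA => (hmem A hA).2.2) ?_
  intro A hA Q hQ hQ4 hQ0
  exact (hmem A hA).2.1 ⟨Q, hQ, hQ4, hQ0⟩

lemma pow_le_const_mul_choose (k n : ℕ) (h : 2 * k ≤ n) :
    (n : ℝ) ^ k ≤ 2 ^ k * k.factorial * n.choose k := by
  have h1 : (((n + 1 - k : ℕ) : ℝ)) ^ k ≤ k.factorial * n.choose k := by
    have := Nat.pow_sub_le_descFactorial n k
    rw [Nat.descFactorial_eq_factorial_mul_choose] at this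
    exact_mod_cast this
  have h2 : (n : ℝ) ≤ 2 * ((n + 1 - k : ℕ) : ℝ) := by
    exact_mod_cast (by omega : n ≤ 2 * (n + 1 - k))
  calc (n : ℝ) ^ k ≤ (2 * ((n + 1 - k : ℕ) : ℝ)) ^ k := by gcongr
    _ = 2 ^ k * ((n + 1 - k : ℕ) : ℝ) ^ k := mul_pow _ _ _
    _ ≤ 2 ^ k * (k.factorial * n.choose k) := by gcongr
    _ = _ := by ring

/-- For every integer `r ≥ 3` and every real `ε > 0` there exists `N` such that for
every integer `n ≥ N` there exists an `F_r(r+2,3)`-free `r`-graph on `n` vertices with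
at least `(1/r − ε)·C(n,r−1)` edges; that is,
`f_r(n, r+2, 3) ≥ (1/r − o(1))·C(n,r−1)` as `n → ∞`. -/
theorem stmt_19 (r : ℕ) (hr : 3 ≤ r) (ε : ℝ) (hε : 0 < ε) :
    ∃ N : ℕ, ∀ n : ℕ, N ≤ n →
      ∃ H : Finset (Finset (Fin n)),
        (∀ A ∈ H, A.card = r) ∧
        FrFree H (r + 2) 3 ∧
        ((1 / r : ℝ) - ε) * (n.choose (r - 1)) ≤ H.card := by
  obtain ⟨k, rfl⟩ : ∃ k, r = k + 1 := ⟨r - 1, by omega⟩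
  rw [Nat.add_sub_cancel]
  set c : ℝ := 2 ^ k * k.factorial with hc
  have hc0 : 0 ≤ c := by positivity
  -- `2 ^ j ≥ 2 c / ε` keeps the loss from forbidden 4-subsets below `ε / 2`.
  obtain ⟨j, hj⟩ := pow_unbounded_of_one_lt (2 * c / ε) (one_lt_two (α := ℝ))
  obtain ⟨M, hM⟩ := exists_nat_ge (2 / ε * (2 ^ j + 1 + c))
  refine ⟨max M (2 * k), fun n hn => ?_⟩
  have hnM : 2 / ε * (2 ^ j + 1 + c) ≤ n :=
    hM.trans (by exact_mod_cast (le_max_left _ _).trans hn)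
  have hnk : 2 * k ≤ n := (le_max_right _ _).trans hn
  set l : ℕ := n / 2 ^ j + 1 with hl
  have : NeZero l := ⟨Nat.succ_ne_zero _⟩
  have hcardG : Fintype.card ((Fin j → ZMod 2) × ZMod l) = 2 ^ j * l := by
    simp [ZMod.card]
  have hGn : n ≤ 2 ^ j * l := (Nat.lt_mul_div_succ n (by positivity)).le
  have hGn' : 2 ^ j * l ≤ n + 2 ^ j := by
    rw [hl, mul_add, mul_one]
    exact Nat.add_le_add_right (Nat.mul_div_le n _) _
  obtain ⟨φ⟩ : Nonempty (Fin n ↪ (Fin j → ZMod 2) × ZMod l) :=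
    Function.Embedding.nonempty_of_card_le (by rw [hcardG, Fintype.card_fin]; exact hGn)
  apply exists_family (fun b => by ext i; exact CharTwo.add_self_eq_zero (b i)) φ φ.injective
  rw [hcardG, ZMod.card, Nat.add_sub_cancel]
  have hpow := pow_le_const_mul_choose k n hnk
  rw [← hc] at hpow
  have hch : (n.choose (k + 1) : ℝ) = n.choose k * ((n - k) / (k + 1)) := by
    have h := Nat.choose_succ_right_eq n k
    have h' : (n.choose (k + 1) : ℝ) * (k + 1) = n.choose k * (n - k) := by
      rw [← Nat.cast_sub (by omega : k ≤ n)]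
      exact_mod_cast h
    rw [← mul_div_assoc, eq_div_iff (by positivity), h']
  have hK : (0 : ℝ) < 2 ^ j := by positivity
  have hG1 : (n : ℝ) ≤ ((2 ^ j * l : ℕ) : ℝ) := by exact_mod_cast hGn
  have hG2 : ((2 ^ j * l : ℕ) : ℝ) ≤ n + 2 ^ j := by exact_mod_cast hGn'
  have hcl : c * l ≤ ε / 2 * n + c := by
    have h1 : (2 : ℝ) ^ j * l ≤ n + 2 ^ j := by exact_mod_cast hGn'
    have h2 : 2 * c ≤ 2 ^ j * ε := ((div_lt_iff₀ hε).mp hj).le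
    have h3 : (l : ℝ) - 1 ≤ n / 2 ^ j := by
      rw [le_div_iff₀ hK]; linarith
    have h4 : c * (n / 2 ^ j) ≤ ε / 2 * n := by
      rw [← mul_div_assoc, div_le_iff₀ hK]
      nlinarith [(Nat.cast_nonneg n : (0 : ℝ) ≤ n)]
    nlinarith [mul_le_mul_of_nonneg_left h3 hc0]
  have hnε : 2 ^ j + 1 + c ≤ ε / 2 * n := by
    have h := mul_le_mul_of_nonneg_left hnM (by positivity : 0 ≤ ε / 2)
    have e : ε / 2 * (2 / ε * (2 ^ j + 1 + c)) = 2 ^ j + 1 + c := by field_simp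
    linarith
  have hfrac : ((n : ℝ) + 2 ^ j) / (k + 1) ≤ (n - k) / (k + 1) + (2 ^ j + 1) := by
    rw [← sub_le_iff_le_add', ← sub_div, div_le_iff₀ (by positivity)]
    nlinarith [(Nat.cast_nonneg k : (0 : ℝ) ≤ k), mul_nonneg (Nat.cast_nonneg k : (0 : ℝ) ≤ k) hK.le]
  -- All terms are compared as multiples of `C(n,k)`.
  have hmain : ((2 ^ j * l : ℕ) : ℝ) * (1 / ((k + 1 : ℕ) : ℝ) - ε) ≤ (n - k) / (k + 1) - c * l := by
    have h1 : ((2 ^ j * l : ℕ) : ℝ) / (k + 1) ≤ (n + 2 ^ j) / (k + 1) := by gcongr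
    have h2 := mul_le_mul_of_nonneg_right hG1 hε.le
    have h3 : ((2 ^ j * l : ℕ) : ℝ) * (1 / ((k + 1 : ℕ) : ℝ) - ε) =
        ((2 ^ j * l : ℕ) : ℝ) / (k + 1) - ((2 ^ j * l : ℕ) : ℝ) * ε := by
      push_cast; ring
    rw [h3]
    linarith
  have hA := mul_le_mul_of_nonneg_right hmain (Nat.cast_nonneg (n.choose k) : (0 : ℝ) ≤ _)
  have hB := mul_le_mul_of_nonneg_right hpow (Nat.cast_nonneg l : (0 : ℝ) ≤ _)
  rw [hch]
  linarith
end
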